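/- Let M = {F = 0} be a germ of an irreducible singular real-analytic Levi-flat hypersurface at 0 ∈ ℂ² with F(z) = Re(Q(z)) + H(z, z̄), where Q is a quasihomogeneous polynomial of type (a,b) with gcd(a,b) = 1 and quasihomogeneous degree d, having an isolated singularity at 0 ∈ ℂ², and H is real-analytic with all Taylor monomials of weighted degree strictly greater than d and H(z, z̄) = conj(H(z̄, z)). Then Sing(L_ℂ) has codimension two in M*_ℂ; that is, the set of points p ∈ M*_ℂ at which α(p) vanishes on T_p M_ℂ is a complex-analytic subset of complex dimension one (Hausdorff dimension two) of the three-dimensional complex manifold M*_ℂ. -/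

import Mathlib

/-!
Near the origin, `Sing(L_ℂ)` is the set of points of `{FC = 0}` at which `dFC ≠ 0` while one of the
partial differentials `d_z FC`, `d_w FC` vanishes (`linear_form_split`): on `ker dFC` the form
`α = d_z FC` vanishes exactly when it is proportional to `dFC = d_z FC + d_w FC`.

Under the dilation `dil₂`, of weights `(a, b)` on both factors of `ℂ² × ℂ²`, the leading part of
`FC` is `leadP Q = (Q(z) + Q̄(w)) / 2`.  The remainder is `O(l ^ (d + 1))` (`weighted_bound`): its
weighted Taylor coefficients of order at most `d` vanish on the totally real subspace `w = z̄`, hence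
everywhere; Cauchy estimates give the matching bounds for its derivatives.  Consequently a system of
equations has `0` as an isolated solution as soon as its weighted leading system has
(`isolated_of_leading`).  For `dFC = 0` the leading system is `∇Q(z) = 0`, `∇Q̄(w) = 0`, so `0` is
the only critical point of `FC` near `0` (`isolated_crit`).  For `d_z FC = 0`, `FC = 0` it is
`∇Q(z) = 0`, `Q(z) + Q̄(w) = 0`, that is `z = 0`, `Q̄(w) = 0`; adding a transverse function
`w₁ ^ a - v w₀ ^ b` (`exists_transverse`) isolates the origin.  The branch `d_w FC = 0` is
symmetric.

So each branch is given by three equations in `ℂ⁴`, and one further equation `t = 0` isolates the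
origin.  Such a germ has Hausdorff dimension two (`dimH_curve`).  For the upper bound, the analytic
set is covered by countably many patches, injective holomorphic images of balls; a fibre of `t` near
the origin is a compact analytic set, hence countable (`compact_analytic_countable`), and this forces
the patches to have complex dimension at most one.  For the lower bound, the map `(t, g₁, g₂, g₃)`
covers a neighbourhood of `0` in `ℂ⁴` (`ball_subset_image`), so `t` takes uncountably many values on
the curve, and one of its patches has positive dimension.
-/

open Filter Topology

/-- Wirtinger derivative ∂/∂z_j of a (complex-valued) function at `p`:
`(1/2)(∂F/∂x_j − i ∂F/∂y_j)`. -/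
noncomputable def wirtZ {n : ℕ} (F : (Fin n → ℂ) → ℂ) (j : Fin n) (p : Fin n → ℂ) : ℂ :=
  (fderiv ℝ F p (Pi.single j 1) - Complex.I * fderiv ℝ F p (Pi.single j Complex.I)) / 2

/-- Wirtinger derivative ∂/∂z̄_j of a (complex-valued) function at `p`:
`(1/2)(∂F/∂x_j + i ∂F/∂y_j)`. -/
noncomputable def wirtZbar {n : ℕ} (F : (Fin n → ℂ) → ℂ) (j : Fin n) (p : Fin n → ℂ) : ℂ :=
  (fderiv ℝ F p (Pi.single j 1) + Complex.I * fderiv ℝ F p (Pi.single j Complex.I)) / 2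

/-- The germ `M = {F = 0}` at `0` is Levi-flat: for every point `p` of `M* = M \ Sing(M)`
near `0` and every `v` with `Σ_j F_{z_j}(p) v_j = 0` one has
`Σ_{i,j} F_{z_i z̄_j}(p) v_i conj(v_j) = 0`. -/
def LeviFlatGerm {n : ℕ} (F : (Fin n → ℂ) → ℝ) : Prop :=
  ∀ᶠ p in 𝓝 (0 : Fin n → ℂ), F p = 0 → fderiv ℝ F p ≠ 0 →
    ∀ v : Fin n → ℂ,
      (∑ j, wirtZ (fun z => ((F z : ℝ) : ℂ)) j p * v j) = 0 →
      (∑ i, ∑ j, wirtZbar (wirtZ (fun z => ((F z : ℝ) : ℂ)) i) j p * v i * (starRingEnd ℂ) (v j)) = 0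

/-- `F` is irreducible in the ring of germs at `0` of real-valued real-analytic functions:
in any factorization `F = g·h` one of the factors is a unit (i.e. does not vanish at `0`). -/
def IrreducibleRGerm {n : ℕ} (F : (Fin n → ℂ) → ℝ) : Prop :=
  ∀ g h : (Fin n → ℂ) → ℝ, AnalyticAt ℝ g 0 → AnalyticAt ℝ h 0 →
    (∀ᶠ z in 𝓝 (0 : Fin n → ℂ), F z = g z * h z) → g 0 ≠ 0 ∨ h 0 ≠ 0

/-- `φ` is a germ of biholomorphism `(ℂⁿ,0) → (ℂⁿ,0)` with local inverse `ι`. -/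
def IsGermBiholo {n : ℕ} (φ ι : (Fin n → ℂ) → (Fin n → ℂ)) : Prop :=
  AnalyticAt ℂ φ 0 ∧ AnalyticAt ℂ ι 0 ∧ φ 0 = 0 ∧ ι 0 = 0 ∧
  (∀ᶠ z in 𝓝 (0 : Fin n → ℂ), ι (φ z) = z) ∧ (∀ᶠ z in 𝓝 (0 : Fin n → ℂ), φ (ι z) = z)

/-- `φ` is volume-preserving (isochore): the determinant of its complex Jacobian is
identically `1` near `0`. -/
def IsVolumePreserving {n : ℕ} (φ : (Fin n → ℂ) → (Fin n → ℂ)) : Prop :=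
  ∀ᶠ z in 𝓝 (0 : Fin n → ℂ), LinearMap.det ((fderiv ℂ φ z).toLinearMap) = 1

/-- `ψ` is a germ of automorphism of `(ℂ,0)`. -/
def IsGermAuto (ψ : ℂ → ℂ) : Prop :=
  AnalyticAt ℂ ψ 0 ∧ ψ 0 = 0 ∧ deriv ψ 0 ≠ 0

/-- `FC` is the complexification of `F`: the (unique) germ of holomorphic function at
`0 ∈ ℂⁿ × ℂⁿ` such that `FC (z, z̄) = F z` near `0`. -/
def IsComplexification {n : ℕ} (F : (Fin n → ℂ) → ℝ)
    (FC : ((Fin n → ℂ) × (Fin n → ℂ)) → ℂ) : Prop :=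
  AnalyticAt ℂ FC 0 ∧ ∀ᶠ z in 𝓝 (0 : Fin n → ℂ), FC (z, star z) = ((F z : ℝ) : ℂ)

/-- The singular set `Sing(M_ℂ) = {F_ℂ = 0} ∩ {dF_ℂ = 0}` of the complexification. -/
def singMC {n : ℕ} (FC : ((Fin n → ℂ) × (Fin n → ℂ)) → ℂ) :
    Set ((Fin n → ℂ) × (Fin n → ℂ)) :=
  {p | FC p = 0 ∧ fderiv ℂ FC p = 0}

/-- The singular set of the complexified Levi foliation `L_ℂ`: points of
`M*_ℂ` at which `α = Σ_j (∂F_ℂ/∂z_j) dz_j` vanishes on `T_p M_ℂ = ker dF_ℂ(p)`.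
Note that `α(p)(v) = dF_ℂ(p)(v₁, 0)`. -/
def singLC {n : ℕ} (FC : ((Fin n → ℂ) × (Fin n → ℂ)) → ℂ) :
    Set ((Fin n → ℂ) × (Fin n → ℂ)) :=
  {p | FC p = 0 ∧ fderiv ℂ FC p ≠ 0 ∧
    ∀ v : (Fin n → ℂ) × (Fin n → ℂ), fderiv ℂ FC p v = 0 → fderiv ℂ FC p (v.1, 0) = 0}

/-! ### Patches and the implicit function theorem -/

section Patches

open Metric Set

/-- The directional derivative `∂_v f`. -/
noncomputable def dirD {E : Type*} [NormedAddCommGroup E] [NormedSpace ℂ E] (v : E) (f : E → ℂ) :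
    E → ℂ :=
  fun x => fderiv ℂ f x v

lemma dirD_iterate_analytic {E : Type*} [NormedAddCommGroup E] [NormedSpace ℂ E] {v : E}
    {f : E → ℂ} {Ω : Set E} (hf : AnalyticOnNhd ℂ f Ω) (m : ℕ) :
    AnalyticOnNhd ℂ ((dirD v)^[m] f) Ω := by
  induction m with
  | zero => exact hf
  | succ m ih =>
    rw [Function.iterate_succ_apply']
    exact (ContinuousLinearMap.apply ℂ ℂ v).comp_analyticOnNhd ih.fderiv

lemma iteratedDeriv_line {E : Type*} [NormedAddCommGroup E] [NormedSpace ℂ E] {v y : E}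
    {f : E → ℂ} {Ω : Set E} (hΩ : IsOpen Ω) (hf : AnalyticOnNhd ℂ f Ω) (m : ℕ) :
    ∀ s : ℂ, y + s • v ∈ Ω →
      iteratedDeriv m (fun s : ℂ => f (y + s • v)) s = (dirD v)^[m] f (y + s • v) := by
  induction m with
  | zero => intro s _; simp
  | succ m ih =>
    intro s hs
    rw [iteratedDeriv_succ, Function.iterate_succ_apply']
    have hcont : Continuous fun s : ℂ => y + s • v := by fun_prop
    have hev : iteratedDeriv m (fun s : ℂ => f (y + s • v)) =ᶠ[𝓝 s]
        fun s => (dirD v)^[m] f (y + s • v) := by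
      filter_upwards [hcont.continuousAt.preimage_mem_nhds (hΩ.mem_nhds hs)] with s' hs'
      exact ih s' hs'
    rw [hev.deriv_eq]
    have h1 : HasFDerivAt ((dirD v)^[m] f) (fderiv ℂ ((dirD v)^[m] f) (y + s • v)) (y + s • v) :=
      ((dirD_iterate_analytic hf m) _ hs).differentiableAt.hasFDerivAt
    have h2 : HasDerivAt (fun s : ℂ => y + s • v) v s := by
      simpa using ((hasDerivAt_id s).smul_const v).const_add y
    exact (h1.comp_hasDerivAt s h2).deriv

/-- A `k`-dimensional patch: the image of a ball of `ℂᵏ` under an injective holomorphic map. -/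
def IsPatch {E : Type*} [NormedAddCommGroup E] [NormedSpace ℂ E] (k : ℕ) (P : Set E) : Prop :=
  ∃ (φ : (Fin k → ℂ) → E) (c : Fin k → ℂ) (r : ℝ), 0 < r ∧ AnalyticOnNhd ℂ φ (ball c r) ∧
    InjOn φ (ball c r) ∧ φ '' ball c r = P

/-- Implicit function theorem: where `∂_j g ≠ 0`, the hypersurface `{g = 0}` is locally a patch. -/
lemma exists_patch_of_fderiv_ne_zero {n : ℕ} {g : (Fin (n + 1) → ℂ) → ℂ} {y : Fin (n + 1) → ℂ}
    (hg : AnalyticAt ℂ g y) (j : Fin (n + 1)) (hj : fderiv ℂ g y (Pi.single j 1) ≠ 0)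
    (h0 : g y = 0) {V : Set (Fin (n + 1) → ℂ)} (hV : V ∈ 𝓝 y) :
    ∃ P : Set (Fin (n + 1) → ℂ), IsPatch n P ∧ P ⊆ V ∩ {x | g x = 0} ∧
      ∃ W ∈ 𝓝 y, W ∩ {x | g x = 0} ⊆ P := by
  classical
  -- straighten `g` to the `j`-th coordinate
  set Θ : (Fin (n + 1) → ℂ) → (Fin (n + 1) → ℂ) :=
    fun x => x + (g x - x j) • (Pi.single j (1 : ℂ) : Fin (n + 1) → ℂ) with hΘ
  have hΘj : ∀ x, Θ x j = g x := by intro x; simp [hΘ]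
  have hΘk : ∀ x k, k ≠ j → Θ x k = x k := by intro x k hk; simp [hΘ, hk]
  have hΘeq : ∀ x, Θ x = j.insertNth (g x) (j.removeNth x) := by
    intro x
    rw [Fin.eq_insertNth_iff]
    refine ⟨hΘj x, ?_⟩
    funext k
    exact hΘk x _ (Fin.succAbove_ne j k)
  have hΘan : AnalyticAt ℂ Θ y := by
    have h1 : AnalyticAt ℂ (fun x : Fin (n + 1) → ℂ => x j) y :=
      (ContinuousLinearMap.proj (R := ℂ) (φ := fun _ : Fin (n + 1) => ℂ) j).analyticAt y
    exact analyticAt_id.add ((hg.sub h1).smul analyticAt_const)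
  let L : (Fin (n + 1) → ℂ) →L[ℂ] (Fin (n + 1) → ℂ) :=
    ContinuousLinearMap.id ℂ _ +
      (fderiv ℂ g y - ContinuousLinearMap.proj (R := ℂ) (φ := fun _ : Fin (n + 1) => ℂ) j).smulRight
        (Pi.single j (1 : ℂ))
  have hL : HasFDerivAt Θ L y := by
    have h1 : HasFDerivAt (fun x : Fin (n + 1) → ℂ => x j)
      (ContinuousLinearMap.proj (R := ℂ) (φ := fun _ : Fin (n + 1) => ℂ) j) y :=
      (ContinuousLinearMap.proj (R := ℂ) (φ := fun _ : Fin (n + 1) => ℂ) j).hasFDerivAt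
    exact (hasFDerivAt_id y).add ((hg.differentiableAt.hasFDerivAt.sub h1).smul_const _)
  have hLinj : Function.Injective L := by
    rw [injective_iff_map_eq_zero]
    intro v hv
    have hvk : ∀ k, k ≠ j → v k = 0 := by
      intro k hk
      have := congrFun hv k
      simpa [L, hk] using this
    have hvj : fderiv ℂ g y v = 0 := by
      have := congrFun hv j
      simpa [L] using this
    have hvs : v = v j • (Pi.single j (1 : ℂ) : Fin (n + 1) → ℂ) := by
      funext k
      by_cases hk : k = j
      · subst hk; simp
      · simp [hk, hvk k hk]
    rw [hvs, map_smul, smul_eq_mul, mul_eq_zero] at hvj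
    rw [hvs, hvj.resolve_right hj, zero_smul]
  let Le : (Fin (n + 1) → ℂ) ≃L[ℂ] (Fin (n + 1) → ℂ) :=
    (LinearEquiv.ofInjectiveEndo L.toLinearMap hLinj).toContinuousLinearEquiv
  have hLe : (Le : (Fin (n + 1) → ℂ) →L[ℂ] (Fin (n + 1) → ℂ)) = L := by
    ext1 v
    rfl
  have hcd : ContDiffAt ℂ ⊤ Θ y := hΘan.contDiffAt
  have hL' : HasFDerivAt Θ (Le : (Fin (n + 1) → ℂ) →L[ℂ] (Fin (n + 1) → ℂ)) y := by
    rw [hLe]; exact hL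
  have htop : (⊤ : WithTop ℕ∞) ≠ 0 := by simp
  set e := hcd.toOpenPartialHomeomorph Θ hL' htop with he
  have hecoe : ∀ x, e x = Θ x := fun x => rfl
  have hys : y ∈ e.source := hcd.mem_toOpenPartialHomeomorph_source hL' htop
  have hyt : Θ y ∈ e.target := hcd.image_mem_toOpenPartialHomeomorph_target hL' htop
  have hsymm : AnalyticAt ℂ e.symm (Θ y) := by
    have := hcd.to_localInverse hL' htop
    exact this.analyticAt
  -- the slice `s ↦ (s with 0 inserted in place j)`
  have hins_an : ∀ s, AnalyticAt ℂ (fun s : Fin n → ℂ => (j.insertNth (0 : ℂ) s : Fin (n + 1) → ℂ)) s := by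
    intro s
    rw [analyticAt_pi_iff]
    intro k
    refine Fin.succAboveCases j ?_ ?_ k
    · simpa using analyticAt_const
    · intro i
      simp only [Fin.insertNth_apply_succAbove]
      exact (ContinuousLinearMap.proj (R := ℂ) (φ := fun _ : Fin n => ℂ) i).analyticAt s
  have hΘy : (j.insertNth (0 : ℂ) (j.removeNth y) : Fin (n + 1) → ℂ) = Θ y := by
    rw [hΘeq, h0]
  have hgood : ∀ᶠ x in 𝓝 (Θ y), AnalyticAt ℂ e.symm x ∧ x ∈ e.target ∧ e.symm x ∈ V := by
    have ht : ∀ᶠ x in 𝓝 (Θ y), x ∈ e.target := e.open_target.mem_nhds hyt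
    refine hsymm.eventually_analyticAt.and (ht.and ?_)
    have : e.symm (Θ y) = y := e.left_inv hys
    exact hsymm.continuousAt.preimage_mem_nhds (by rw [this]; exact hV)
  rw [← hΘy] at hgood
  obtain ⟨r, hr, hball⟩ := Metric.eventually_nhds_iff_ball.1
    ((hins_an (j.removeNth y)).continuousAt.eventually hgood)
  have hΘsymm : ∀ s ∈ ball (j.removeNth y) r, Θ (e.symm (j.insertNth (0 : ℂ) s)) = j.insertNth (0 : ℂ) s :=
    fun s hs => e.right_inv (hball s hs).2.1
  refine ⟨_, ⟨fun s => e.symm (j.insertNth (0 : ℂ) s), j.removeNth y, r, hr, ?_, ?_, rfl⟩, ?_, ?_⟩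
  · intro s hs
    exact (hball s hs).1.comp (hins_an s)
  · intro s hs s' hs' hss
    have h1 := hΘsymm s hs
    have h2 := hΘsymm s' hs'
    simp only at hss
    rw [hss, h2] at h1
    exact (Fin.insertNth_right_injective (α := fun _ : Fin (n + 1) => ℂ) (p := j) (0 : ℂ) h1).symm
  · rintro _ ⟨s, hs, rfl⟩
    refine ⟨(hball s hs).2.2, ?_⟩
    have := congrFun (hΘsymm s hs) j
    rw [hΘj] at this
    simpa using this
  · refine ⟨e.source ∩ (fun x => j.removeNth x) ⁻¹' ball (j.removeNth y) r, ?_, ?_⟩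
    · refine inter_mem (e.open_source.mem_nhds hys) ?_
      have hc : Continuous fun x : Fin (n + 1) → ℂ => (j.removeNth x : Fin n → ℂ) :=
        continuous_pi fun k => continuous_apply _
      exact hc.continuousAt.preimage_mem_nhds (ball_mem_nhds _ hr)
    · rintro x ⟨⟨hxs, hxr⟩, hx0⟩
      refine ⟨j.removeNth x, hxr, ?_⟩
      have : (j.insertNth (0 : ℂ) (j.removeNth x) : Fin (n + 1) → ℂ) = Θ x := by
        rw [hΘeq, show g x = 0 from hx0]
      simp only [this]
      exact e.left_inv hxs

lemma exists_single_ne_zero {n : ℕ} {L : (Fin n → ℂ) →L[ℂ] ℂ} {v : Fin n → ℂ} (h : L v ≠ 0) :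
    ∃ j, L (Pi.single j 1) ≠ 0 := by
  by_contra! hc
  apply h
  have := congrArg (fun T : (Fin n → ℂ) →ₗ[ℂ] ℂ => T v)
    (LinearMap.pi_ext' (f := L.toLinearMap) (g := 0) (fun j => by
      ext; simpa using hc j))
  simpa using this

end Patches

/-! ### Stratification of analytic sets -/

section Strata

open Metric Set

/-- The zero set of a nonzero holomorphic function on a ball of `ℂⁿ⁺¹` is covered by countably many
`n`-dimensional patches.  At a zero `y` some iterated derivative `∂_v^m f`, with `v` in a countable
dense set, vanishes at `y` while its differential does not, and the implicit function theorem
applies to it. -/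
lemma hypersurface_cover {n : ℕ} {f : (Fin (n + 1) → ℂ) → ℂ} {x₀ : Fin (n + 1) → ℂ} {ρ : ℝ}
    (hf : AnalyticOnNhd ℂ f (ball x₀ ρ)) {p : Fin (n + 1) → ℂ} (hp : p ∈ ball x₀ ρ)
    (hfp : f p ≠ 0) :
    ∃ Ps : Set (Set (Fin (n + 1) → ℂ)), Ps.Countable ∧ (∀ P ∈ Ps, IsPatch n P ∧ P ⊆ ball x₀ ρ) ∧
      {x ∈ ball x₀ ρ | f x = 0} ⊆ ⋃₀ Ps := by
  classical
  set u := TopologicalSpace.denseSeq (Fin (n + 1) → ℂ) with hu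
  have hud : DenseRange u := TopologicalSpace.denseRange_denseSeq _
  let g : ℕ × ℕ → (Fin (n + 1) → ℂ) → ℂ := fun i => (dirD (u i.1))^[i.2] f
  have hg : ∀ i, AnalyticOnNhd ℂ (g i) (ball x₀ ρ) := fun i => dirD_iterate_analytic hf i.2
  let A : ℕ × ℕ → Set (Fin (n + 1) → ℂ) :=
    fun i => {y ∈ ball x₀ ρ | g i y = 0 ∧ fderiv ℂ (g i) y (u i.1) ≠ 0}
  -- each zero lies in some `A i`
  have hcover : {x ∈ ball x₀ ρ | f x = 0} ⊆ ⋃ i, A i := by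
    rintro y ⟨hy, hfy⟩
    have hopen : IsOpen {v | y + v ∈ ball x₀ ρ ∩ {x | f x ≠ 0}} := by
      have h1 : IsOpen (ball x₀ ρ ∩ {x | f x ≠ 0}) := by
        have := hf.continuousOn.isOpen_inter_preimage isOpen_ball
          (isOpen_compl_singleton (x := (0 : ℂ)))
        exact this
      exact h1.preimage (continuous_const.add continuous_id)
    obtain ⟨k, hk⟩ := hud.exists_mem_open hopen ⟨p - y, by simpa using ⟨hp, hfp⟩⟩
    set v := u k with hv
    have hΩ : IsOpen {s : ℂ | y + s • v ∈ ball x₀ ρ} :=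
      isOpen_ball.preimage (by fun_prop)
    have hconv : Convex ℝ {s : ℂ | y + s • v ∈ ball x₀ ρ} := by
      intro s hs s' hs' a b ha hb hab
      have : y + (a • s + b • s') • v = a • (y + s • v) + b • (y + s' • v) := by
        have h1 : y = a • y + b • y := by rw [← add_smul, hab, one_smul]
        conv_lhs => rw [h1]
        rw [add_smul, smul_assoc, smul_assoc, smul_add, smul_add]
        abel
      show y + (a • s + b • s') • v ∈ ball x₀ ρ
      rw [this]
      exact (convex_ball x₀ ρ) hs hs' ha hb hab
    have han : AnalyticOnNhd ℂ (fun s : ℂ => f (y + s • v)) {s : ℂ | y + s • v ∈ ball x₀ ρ} := by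
      intro s hs
      have h2 : AnalyticAt ℂ (fun s : ℂ => y + s • v) s := by fun_prop
      exact AnalyticAt.fun_comp (g := f) (hf _ hs) h2
    have h0mem : (0 : ℂ) ∈ {s : ℂ | y + s • v ∈ ball x₀ ρ} := by simpa using hy
    have h1mem : (1 : ℂ) ∈ {s : ℂ | y + s • v ∈ ball x₀ ρ} := by simpa using hk.1
    have hnot : ∃ m, iteratedDeriv m (fun s : ℂ => f (y + s • v)) 0 ≠ 0 := by
      by_contra! hall
      have htop : analyticOrderAt (fun s : ℂ => f (y + s • v)) 0 = ⊤ := by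
        rw [ENat.eq_top_iff_forall_ge]
        intro m
        exact (natCast_le_analyticOrderAt_iff_iteratedDeriv_eq_zero (han 0 h0mem)).2
          fun i _ => hall i
      have hev := analyticOrderAt_eq_top.1 htop
      have := han.eqOn_zero_of_preconnected_of_eventuallyEq_zero hconv.isPreconnected h0mem hev h1mem
      exact hk.2 (by simpa using this)
    have hfind := Nat.find_spec hnot
    obtain ⟨m, hm⟩ : ∃ m, Nat.find hnot = m + 1 := by
      refine Nat.exists_eq_succ_of_ne_zero fun h0 => ?_
      rw [h0] at hfind
      simp [hfy] at hfind
    have hmin : iteratedDeriv m (fun s : ℂ => f (y + s • v)) 0 = 0 := by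
      by_contra hne
      exact Nat.find_min hnot (m := m) (by omega) hne
    rw [hm] at hfind
    have hy0 : y + (0 : ℂ) • v ∈ ball x₀ ρ := by simpa using hy
    rw [iteratedDeriv_line isOpen_ball hf _ _ hy0] at hmin hfind
    rw [Function.iterate_succ_apply'] at hfind
    simp only [zero_smul, add_zero] at hmin hfind
    exact mem_iUnion.2 ⟨(k, m), hy, hmin, hfind⟩
  -- around each point of `A i` there is a patch
  have hloc : ∀ i, ∀ y ∈ A i, ∃ P : Set (Fin (n + 1) → ℂ), IsPatch n P ∧ P ⊆ ball x₀ ρ ∧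
      ∃ W ∈ 𝓝 y, W ∩ {x | g i x = 0} ⊆ P := by
    rintro i y ⟨hy, hgy, hd⟩
    obtain ⟨j, hj⟩ := exists_single_ne_zero hd
    obtain ⟨P, hP, hPV, W, hW, hWP⟩ :=
      exists_patch_of_fderiv_ne_zero (hg i y hy) j hj hgy (isOpen_ball.mem_nhds hy)
    exact ⟨P, hP, fun x hx => (hPV hx).1, W, hW, hWP⟩
  have hi : ∀ i, ∃ Ps : Set (Set (Fin (n + 1) → ℂ)), Ps.Countable ∧
      (∀ P ∈ Ps, IsPatch n P ∧ P ⊆ ball x₀ ρ) ∧ A i ⊆ ⋃₀ Ps := by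
    intro i
    choose! P hP hPV W hW hWP using hloc i
    obtain ⟨t, htA, htc, ht⟩ := TopologicalSpace.countable_cover_nhdsWithin
      (f := W) (s := A i) (fun y hy => mem_nhdsWithin_of_mem_nhds (hW y hy))
    refine ⟨P '' t, htc.image P, ?_, ?_⟩
    · rintro _ ⟨y, hy, rfl⟩
      exact ⟨hP y (htA hy), hPV y (htA hy)⟩
    · intro x hx
      obtain ⟨y, hy, hxy⟩ := mem_iUnion₂.1 (ht hx)
      exact ⟨P y, ⟨y, hy, rfl⟩, hWP y (htA hy) ⟨hxy, hx.2.1⟩⟩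
  choose Ps h1 h2 h3 using hi
  refine ⟨⋃ i, Ps i, countable_iUnion h1, ?_, ?_⟩
  · intro P hP
    obtain ⟨i, hP⟩ := mem_iUnion.1 hP
    exact h2 i P hP
  · intro x hx
    obtain ⟨i, hxi⟩ := mem_iUnion.1 (hcover hx)
    obtain ⟨P, hP, hxP⟩ := h3 i hxi
    exact ⟨P, mem_iUnion.2 ⟨i, hP⟩, hxP⟩

/-- Every analytic subset of an open set of `ℂⁿ` is a countable union of patches. -/
theorem analytic_stratification {ι : Type} (n : ℕ) :
    ∀ (V : Set (Fin n → ℂ)), IsOpen V → ∀ f : ι → (Fin n → ℂ) → ℂ,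
      (∀ i, AnalyticOnNhd ℂ (f i) V) →
      ∃ Ps : Set (Set (Fin n → ℂ)), Ps.Countable ∧
        (∀ P ∈ Ps, (∃ k, IsPatch k P) ∧ P ⊆ {x ∈ V | ∀ i, f i x = 0}) ∧
        {x ∈ V | ∀ i, f i x = 0} ⊆ ⋃₀ Ps := by
  induction n with
  | zero =>
    intro V hV f hf
    by_cases h : (0 : Fin 0 → ℂ) ∈ {x ∈ V | ∀ i, f i x = 0}
    · refine ⟨{{0}}, countable_singleton _, ?_, ?_⟩
      · rintro P rfl
        refine ⟨⟨0, id, 0, 1, one_pos, analyticOnNhd_id, injOn_id _, ?_⟩, by simpa using h⟩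
        ext x
        simp [Subsingleton.elim x 0]
      · intro x _
        exact ⟨{0}, rfl, Subsingleton.elim x 0⟩
    · refine ⟨∅, countable_empty, by simp, ?_⟩
      intro x hx
      rw [Subsingleton.elim x 0] at hx
      exact absurd hx h
  | succ n ih =>
    intro V hV f hf
    set Z := {x ∈ V | ∀ i, f i x = 0} with hZ
    have hloc : ∀ x ∈ Z, ∃ W ∈ 𝓝 x, ∃ Ps : Set (Set (Fin (n + 1) → ℂ)), Ps.Countable ∧
        (∀ P ∈ Ps, (∃ k, IsPatch k P) ∧ P ⊆ Z) ∧ Z ∩ W ⊆ ⋃₀ Ps := by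
      intro x hx
      obtain ⟨ρ, hρ, hball⟩ := Metric.isOpen_iff.1 hV x hx.1
      refine ⟨ball x ρ, ball_mem_nhds x hρ, ?_⟩
      by_cases hall : ∀ i, ∀ y ∈ ball x ρ, f i y = 0
      · have hsub : ball x ρ ⊆ Z := fun y hy => ⟨hball hy, fun i => hall i y hy⟩
        refine ⟨{ball x ρ}, countable_singleton _, ?_, ?_⟩
        · rintro P rfl
          exact ⟨⟨n + 1, id, x, ρ, hρ, analyticOnNhd_id, injOn_id _, image_id _⟩, hsub⟩
        · rintro y ⟨_, hy⟩
          exact ⟨_, rfl, hy⟩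
      · push Not at hall
        obtain ⟨i₀, p, hp, hne⟩ := hall
        obtain ⟨Ps, hc, hP, hcov⟩ := hypersurface_cover ((hf i₀).mono hball) hp hne
        -- pull the equations back to each hypersurface patch
        have hstep : ∀ P ∈ Ps, ∃ Qs : Set (Set (Fin (n + 1) → ℂ)), Qs.Countable ∧
            (∀ R ∈ Qs, (∃ k, IsPatch k R) ∧ R ⊆ Z) ∧ Z ∩ P ⊆ ⋃₀ Qs := by
          intro P hPm
          obtain ⟨⟨φ, c, r, hr, hφ, hφi, rfl⟩, hPb⟩ := hP P hPm
          have hmaps : ∀ s ∈ ball c r, φ s ∈ V := fun s hs => hball (hPb ⟨s, hs, rfl⟩)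
          obtain ⟨Qs, h1, h2, h3⟩ := ih (ball c r) isOpen_ball (fun i s => f i (φ s))
            (fun i s hs => (hf i _ (hmaps s hs)).comp (hφ s hs))
          refine ⟨(fun R => φ '' R) '' Qs, h1.image _, ?_, ?_⟩
          · rintro _ ⟨R, hR, rfl⟩
            obtain ⟨⟨k, ψ, c', r', hr', hψ, hψi, rfl⟩, hRZ⟩ := h2 R hR
            have hm : ∀ s ∈ ball c' r', ψ s ∈ ball c r := fun s hs => (hRZ ⟨s, hs, rfl⟩).1
            refine ⟨⟨k, fun s => φ (ψ s), c', r', hr', ?_, ?_, ?_⟩, ?_⟩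
            · exact fun s hs => (hφ _ (hm s hs)).comp (hψ s hs)
            · exact hφi.comp hψi hm
            · simp only [image_image]
            · rintro _ ⟨s, hs, rfl⟩
              exact ⟨hmaps s (hRZ hs).1, (hRZ hs).2⟩
          · rintro _ ⟨hxZ, s, hs, rfl⟩
            obtain ⟨R, hR, hsR⟩ := h3 ⟨hs, hxZ.2⟩
            exact ⟨φ '' R, ⟨R, hR, rfl⟩, s, hsR, rfl⟩
        choose! Qs h1 h2 h3 using hstep
        refine ⟨⋃ P ∈ Ps, Qs P, hc.biUnion h1, ?_, ?_⟩
        · intro R hR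
          obtain ⟨P, hPm, hR⟩ := mem_iUnion₂.1 hR
          exact h2 P hPm R hR
        · rintro y ⟨hyZ, hyb⟩
          obtain ⟨P, hPm, hyP⟩ := hcov ⟨hyb, hyZ.2 i₀⟩
          obtain ⟨R, hR, hyR⟩ := h3 P hPm ⟨hyZ, hyP⟩
          exact ⟨R, mem_iUnion₂.2 ⟨P, hPm, hR⟩, hyR⟩
    choose! W hW Ps h1 h2 h3 using hloc
    obtain ⟨t, htZ, htc, ht⟩ := TopologicalSpace.countable_cover_nhdsWithin
      (f := W) (s := Z) (fun y hy => mem_nhdsWithin_of_mem_nhds (hW y hy))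
    refine ⟨⋃ y ∈ t, Ps y, htc.biUnion fun y hy => h1 y (htZ hy), ?_, ?_⟩
    · intro R hR
      obtain ⟨y, hy, hR⟩ := mem_iUnion₂.1 hR
      exact h2 y (htZ hy) R hR
    · intro x hx
      obtain ⟨y, hy, hxy⟩ := mem_iUnion₂.1 (ht hx)
      obtain ⟨R, hR, hxR⟩ := h3 y (htZ hy) ⟨hx, hxy⟩
      exact ⟨R, mem_iUnion₂.2 ⟨y, hy, hR⟩, hxR⟩

/-- A compact subset of `ℂ` with nonempty interior has uncountable boundary, since removing a
countable set does not disconnect the plane. -/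
lemma interior_eq_empty_of_countable_frontier {K : Set ℂ} (hK : IsCompact K)
    (hc : (frontier K).Countable) : interior K = ∅ := by
  by_contra hne
  have hconn : IsConnected (frontier K)ᶜ :=
    hc.isConnected_compl_of_one_lt_rank (by simp)
  have hcompl : (Kᶜ).Nonempty := by
    by_contra h
    rw [not_nonempty_iff_eq_empty, compl_empty_iff] at h
    exact noncompact_univ ℂ (h ▸ hK)
  have hsub : (frontier K)ᶜ ⊆ interior K ∪ Kᶜ := by
    intro x hx
    by_cases hxK : x ∈ K
    · left
      by_contra hxi
      exact hx ⟨subset_closure hxK, hxi⟩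
    · exact Or.inr hxK
  obtain ⟨x, hx⟩ := nonempty_iff_ne_empty.2 hne
  obtain ⟨y, hy⟩ := hcompl
  obtain ⟨z, _, hz1, hz2⟩ := hconn.isPreconnected _ _ isOpen_interior hK.isClosed.isOpen_compl hsub
    ⟨x, fun h => h.2 hx, hx⟩
    ⟨y, fun h => hy (hK.isClosed.frontier_subset h), hy⟩
  exact hz2 (interior_subset hz1)

/-- Any patch contained in a compact analytic set is a single point: otherwise a coordinate function
maps the compact set onto a compact set `S` with interior, while each patch either is open under
the coordinate or contributes one value, so that `S` has countable boundary. -/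
theorem compact_analytic_countable {ι : Type} {n : ℕ} {V : Set (Fin n → ℂ)} (hV : IsOpen V)
    {f : ι → (Fin n → ℂ) → ℂ} (hf : ∀ i, AnalyticOnNhd ℂ (f i) V)
    (hK : IsCompact {x ∈ V | ∀ i, f i x = 0}) : {x ∈ V | ∀ i, f i x = 0}.Countable := by
  obtain ⟨Ps, hc, hP, hcov⟩ := analytic_stratification n V hV f hf
  set K := {x ∈ V | ∀ i, f i x = 0} with hKdef
  have hdich : ∀ P ∈ Ps, ∀ j : Fin n, (∃ w, ∀ x ∈ P, x j = w) ∨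
      IsOpen ((fun x : Fin n → ℂ => x j) '' P) := by
    intro P hPm j
    obtain ⟨⟨k, φ, c, r, hr, hφ, hφi, rfl⟩, -⟩ := hP P hPm
    have han : AnalyticOnNhd ℂ (fun s => φ s j) (ball c r) := fun s hs =>
      (analyticAt_pi_iff.1 (hφ s hs)) j
    rcases han.is_constant_or_isOpen (convex_ball c r).isPreconnected with ⟨w, hw⟩ | hopen
    · left
      refine ⟨w, ?_⟩
      rintro _ ⟨s, hs, rfl⟩
      exact hw s hs
    · right
      rw [image_image]
      exact hopen _ Subset.rfl isOpen_ball
  have hinterior : ∀ j : Fin n, interior ((fun x : Fin n → ℂ => x j) '' K) = ∅ := by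
    intro j
    have hKj : IsCompact ((fun x : Fin n → ℂ => x j) '' K) := hK.image (continuous_apply j)
    refine interior_eq_empty_of_countable_frontier hKj ?_
    have hsub : frontier ((fun x : Fin n → ℂ => x j) '' K) ⊆
        ⋃ P ∈ {P ∈ Ps | ∃ w, ∀ x ∈ P, x j = w}, (fun x : Fin n → ℂ => x j) '' P := by
      intro w hw
      obtain ⟨x, hxK, rfl⟩ := hKj.isClosed.frontier_subset hw
      obtain ⟨P, hPm, hxP⟩ := hcov hxK
      rcases hdich P hPm j with hconst | hopen
      · exact mem_iUnion₂.2 ⟨P, ⟨hPm, hconst⟩, x, hxP, rfl⟩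
      · exact absurd (interior_maximal (image_mono (hP P hPm).2) hopen ⟨x, hxP, rfl⟩) hw.2
    refine Countable.mono hsub ((hc.mono fun P hP => hP.1).biUnion ?_)
    rintro P ⟨_, w, hw⟩
    refine (countable_singleton w).mono ?_
    rintro _ ⟨x, hx, rfl⟩
    exact hw x hx
  refine Countable.mono hcov (hc.sUnion fun P hPm => Subsingleton.countable ?_)
  intro x hx y hy
  funext j
  rcases hdich P hPm j with ⟨w, hw⟩ | hopen
  · rw [hw x hx, hw y hy]
  · exfalso
    have := interior_maximal (image_mono (hP P hPm).2) hopen ⟨x, hx, rfl⟩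
    rw [hinterior j] at this
    exact this

end Strata

/-! ### Images of holomorphic maps with isolated zero -/

section Degree

open Metric Set

lemma finrank_real_fin (k : ℕ) : Module.finrank ℝ (Fin k → ℂ) = 2 * k := by
  rw [Module.finrank_pi_fintype]
  simp [Complex.finrank_real_complex, mul_comm]

lemma analyticAt_jacobian {n : ℕ} {G : (Fin n → ℂ) → (Fin n → ℂ)} {z : Fin n → ℂ}
    (hG : AnalyticAt ℂ G z) : AnalyticAt ℂ (fun z => (fderiv ℂ G z).det) z := by
  classical
  have h : (fun z => (fderiv ℂ G z).det) = fun z =>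
      ∑ σ : Equiv.Perm (Fin n), ((Equiv.Perm.sign σ : ℤ) : ℂ) *
        ∏ i, fderiv ℂ G z (Pi.single i 1) (σ i) := by
    funext z
    rw [ContinuousLinearMap.det, ← LinearMap.det_toMatrix', Matrix.det_apply]
    refine Finset.sum_congr rfl fun σ _ => ?_
    rw [Units.smul_def, zsmul_eq_mul]
    congr 1
  rw [h]
  refine Finset.analyticAt_fun_sum _ fun σ _ => analyticAt_const.mul ?_
  refine Finset.analyticAt_fun_prod _ fun i _ => ?_
  have h1 : AnalyticAt ℂ (fun z => fderiv ℂ G z (Pi.single i 1)) z :=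
    ((ContinuousLinearMap.apply ℂ (Fin n → ℂ) (Pi.single i (1 : ℂ) : Fin n → ℂ)).analyticAt _).comp
      hG.fderiv
  exact analyticAt_pi_iff.1 h1 _

/-- The inverse function theorem: a holomorphic map is open at a point of nonzero Jacobian. -/
lemma map_nhds_of_jacobian {n : ℕ} {G : (Fin n → ℂ) → (Fin n → ℂ)} {z : Fin n → ℂ}
    (hG : AnalyticAt ℂ G z) (hz : (fderiv ℂ G z).det ≠ 0) : map G (𝓝 z) = 𝓝 (G z) := by
  have h : HasStrictFDerivAt G
      (((fderiv ℂ G z).toContinuousLinearEquivOfDetNeZero hz : (Fin n → ℂ) ≃L[ℂ] (Fin n → ℂ)) :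
        (Fin n → ℂ) →L[ℂ] (Fin n → ℂ)) z := by
    have : (((fderiv ℂ G z).toContinuousLinearEquivOfDetNeZero hz : (Fin n → ℂ) ≃L[ℂ] (Fin n → ℂ)) :
        (Fin n → ℂ) →L[ℂ] (Fin n → ℂ)) = fderiv ℂ G z := by ext1 v; rfl
    rw [this]
    exact hG.hasStrictFDerivAt
  exact h.map_nhds_eq_of_equiv

/-- The surjectivity statement when `dG(0)` is invertible.  The critical values, and all their real
multiples, form a set of real codimension one, so a generic segment from `0` meets none of them and
can be followed inside the image of `G`. -/
lemma ball_subset_image_of_det {n : ℕ} {G : (Fin (n + 1) → ℂ) → (Fin (n + 1) → ℂ)} {r δ : ℝ}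
    (hr : 0 < r) (hG : AnalyticOnNhd ℂ G (closedBall 0 r)) (h0 : G 0 = 0)
    (hδ : ∀ z ∈ sphere (0 : Fin (n + 1) → ℂ) r, δ ≤ ‖G z‖) (hdet : (fderiv ℂ G 0).det ≠ 0) :
    ball 0 δ ⊆ G '' closedBall 0 r := by
  set A := G '' closedBall 0 r with hA
  have hAc : IsClosed A :=
    ((isCompact_closedBall _ _).image_of_continuousOn hG.continuousOn).isClosed
  have hJ : AnalyticOnNhd ℂ (fun z => (fderiv ℂ G z).det) (ball 0 r) :=
    fun z hz => analyticAt_jacobian (hG z (ball_subset_closedBall hz))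
  obtain ⟨Ps, hc, hP, hcov⟩ := hypersurface_cover hJ (mem_ball_self hr) hdet
  -- the cone over the critical values
  let B : Set (Fin (n + 1) → ℂ) → Set (Fin (n + 1) → ℂ) :=
    fun P => {y | ∃ τ : ℝ, ∃ x ∈ P, y = τ • G x}
  have hB : ∀ P ∈ Ps, dimH (B P) ≤ (2 * n + 1 : ℕ) := by
    intro P hPm
    obtain ⟨⟨φ, c, ρ, hρ, hφ, hφi, rfl⟩, hsub⟩ := hP P hPm
    have himg : B (φ '' ball c ρ) ⊆
        (fun q : (Fin n → ℂ) × ℝ => q.2 • G (φ q.1)) '' (ball c ρ ×ˢ univ) := by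
      rintro y ⟨τ, _, ⟨s, hs, rfl⟩, rfl⟩
      exact ⟨(s, τ), ⟨hs, mem_univ _⟩, rfl⟩
    have hcd : ContDiffOn ℝ 1 (fun q : (Fin n → ℂ) × ℝ => q.2 • G (φ q.1)) (ball c ρ ×ˢ univ) := by
      intro q hq
      have h1 : AnalyticAt ℂ (fun s => G (φ s)) q.1 :=
        AnalyticAt.fun_comp (g := G) (hG _ (ball_subset_closedBall (hsub ⟨_, hq.1, rfl⟩)))
          (hφ q.1 hq.1)
      have h2 : ContDiffAt ℝ 1 (fun s => G (φ s)) q.1 :=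
        (h1.restrictScalars (𝕜 := ℝ)).contDiffAt
      have h3 : ContDiffAt ℝ 1 (fun q : (Fin n → ℂ) × ℝ => G (φ q.1)) q :=
        ContDiffAt.comp (g := fun s => G (φ s)) q h2 contDiffAt_fst
      exact (contDiffAt_snd.smul h3).contDiffWithinAt
    refine (dimH_mono himg).trans ((hcd.dimH_image_le
      ((convex_ball c ρ).prod convex_univ) Subset.rfl).trans ?_)
    refine (dimH_mono (subset_univ _)).trans ?_
    rw [Real.dimH_univ_eq_finrank, Module.finrank_prod, finrank_real_fin, Module.finrank_self]
  have hdense : Dense (⋃ P ∈ Ps, B P)ᶜ := by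
    apply dense_compl_of_dimH_lt_finrank
    rw [dimH_bUnion hc]
    refine lt_of_le_of_lt (iSup₂_le hB) ?_
    rw [finrank_real_fin]
    exact_mod_cast (by omega : 2 * n + 1 < 2 * (n + 1))
  intro y₁ hy₁
  by_contra hy₁A
  obtain ⟨y, ⟨hyδ, hyA⟩, hyB⟩ := hdense.inter_open_nonempty (ball 0 δ ∩ Aᶜ)
    (isOpen_ball.inter hAc.isOpen_compl) ⟨y₁, hy₁, hy₁A⟩
  have hyδ' : ‖y‖ < δ := by simpa using hyδ
  -- the set of `t` with `t • y ∈ A` is closed, and open to the right since `t • y` is a regular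
  -- value attained away from the sphere
  have key : Icc (0 : ℝ) 1 ⊆ {t : ℝ | t • y ∈ A} := by
    refine IsClosed.Icc_subset_of_forall_mem_nhdsWithin ?_ ?_ ?_
    · exact (hAc.preimage (by fun_prop : Continuous fun t : ℝ => t • y)).inter isClosed_Icc
    · exact ⟨0, by simp [hr.le], by simp [h0]⟩
    · rintro x ⟨hxA, hx0, hx1⟩
      have hopen : ∃ z ∈ ball (0 : Fin (n + 1) → ℂ) r, G z = x • y ∧ (fderiv ℂ G z).det ≠ 0 := by
        rcases hx0.eq_or_lt with rfl | hx0
        · exact ⟨0, mem_ball_self hr, by simp [h0], hdet⟩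
        · obtain ⟨z, hz, hzx⟩ := hxA
          have hzb : z ∈ ball (0 : Fin (n + 1) → ℂ) r := by
            by_contra hzb
            have hzs : z ∈ sphere (0 : Fin (n + 1) → ℂ) r := by
              rw [mem_sphere]
              rw [mem_closedBall] at hz
              rw [mem_ball, not_lt] at hzb
              exact le_antisymm hz hzb
            have h1 := hδ z hzs
            rw [hzx, norm_smul, Real.norm_of_nonneg hx0.le] at h1
            nlinarith [norm_nonneg y]
          refine ⟨z, hzb, hzx, fun hz0 => hyB ?_⟩
          obtain ⟨P, hPm, hzP⟩ := hcov ⟨hzb, hz0⟩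
          refine mem_iUnion₂.2 ⟨P, hPm, x⁻¹, z, hzP, ?_⟩
          rw [hzx, smul_smul, inv_mul_cancel₀ hx0.ne', one_smul]
      obtain ⟨z, hz, hzx, hzd⟩ := hopen
      have hmap := map_nhds_of_jacobian (hG z (ball_subset_closedBall hz)) hzd
      have hAn : A ∈ 𝓝 (x • y) := by
        rw [← hzx, ← hmap]
        exact image_mem_map (mem_of_superset (isOpen_ball.mem_nhds hz) ball_subset_closedBall)
      refine mem_nhdsWithin_of_mem_nhds ?_
      have hcont : Continuous fun t : ℝ => t • y := by fun_prop
      exact hcont.continuousAt.preimage_mem_nhds hAn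
  have h1 : (1 : ℝ) • y ∈ A := key ⟨zero_le_one, le_rfl⟩
  rw [one_smul] at h1
  exact hyA h1

/-- A holomorphic map of a closed ball of `ℂⁿ⁺¹` fixing the origin and of norm at least `δ` on the
bounding sphere covers the ball of radius `δ`.  Perturbing `G` by small multiples of the identity
reduces to invertible `dG(0)`. -/
theorem ball_subset_image {n : ℕ} {G : (Fin (n + 1) → ℂ) → (Fin (n + 1) → ℂ)} {r δ : ℝ}
    (hr : 0 < r) (hG : AnalyticOnNhd ℂ G (closedBall 0 r)) (h0 : G 0 = 0)
    (hδ : ∀ z ∈ sphere (0 : Fin (n + 1) → ℂ) r, δ ≤ ‖G z‖) :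
    ball 0 δ ⊆ G '' closedBall 0 r := by
  intro y hy
  have hyδ : ‖y‖ < δ := by simpa using hy
  have hAc : IsClosed (G '' closedBall 0 r) :=
    ((isCompact_closedBall _ _).image_of_continuousOn hG.continuousOn).isClosed
  rw [← hAc.closure_eq, Metric.mem_closure_iff]
  intro e he
  set η := min e (δ - ‖y‖) / r with hη
  have hηpos : 0 < η := div_pos (lt_min he (by linarith)) hr
  -- all but finitely many perturbations have invertible differential
  obtain ⟨ε, ⟨hε0, hε1⟩, hεgood⟩ : ∃ ε ∈ Ioo (0 : ℝ) η,
      ¬ Module.End.HasEigenvalue ((fderiv ℂ G 0).toLinearMap) (-(ε : ℂ)) := by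
    have hfin : {ε : ℝ | Module.End.HasEigenvalue ((fderiv ℂ G 0).toLinearMap) (-(ε : ℂ))}.Finite := by
      refine (Module.End.finite_hasEigenvalue ((fderiv ℂ G 0).toLinearMap)).preimage ?_
      intro x _ y _ hxy
      simpa using hxy
    obtain ⟨ε, hε, hn⟩ := ((Ioo_infinite hηpos).sdiff hfin).nonempty
    exact ⟨ε, hε, hn⟩
  have hεr : ε * r < min e (δ - ‖y‖) := by
    rw [hη, lt_div_iff₀ hr] at hε1
    exact hε1
  set G' : (Fin (n + 1) → ℂ) → (Fin (n + 1) → ℂ) := fun z => G z + (ε : ℂ) • z with hG'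
  have hG'an : AnalyticOnNhd ℂ G' (closedBall 0 r) := fun z hz =>
    (hG z hz).fun_add (analyticAt_const.fun_smul analyticAt_id)
  have hfd : fderiv ℂ G' 0 = fderiv ℂ G 0 + (ε : ℂ) • ContinuousLinearMap.id ℂ _ := by
    have h1 : HasFDerivAt G (fderiv ℂ G 0) 0 :=
      (hG 0 (mem_closedBall_self hr.le)).differentiableAt.hasFDerivAt
    exact (h1.add ((hasFDerivAt_id (𝕜 := ℂ) (0 : Fin (n + 1) → ℂ)).const_smul (ε : ℂ))).fderiv
  have hdet : (fderiv ℂ G' 0).det ≠ 0 := by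
    intro hdet
    have hker := LinearMap.bot_lt_ker_of_det_eq_zero hdet
    obtain ⟨v, hv, hv0⟩ := Submodule.exists_mem_ne_zero_of_ne_bot hker.ne'
    refine hεgood (Module.End.hasEigenvalue_of_hasEigenvector (x := v) ⟨?_, hv0⟩)
    rw [Module.End.mem_eigenspace_iff]
    have hv' : fderiv ℂ G' 0 v = 0 := hv
    rw [hfd] at hv'
    have hv'' : fderiv ℂ G 0 v + (ε : ℂ) • v = 0 := hv'
    rw [neg_smul]
    exact eq_neg_of_add_eq_zero_left hv''
  have hδ' : ∀ z ∈ sphere (0 : Fin (n + 1) → ℂ) r, δ - ε * r ≤ ‖G' z‖ := by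
    intro z hz
    have hzr : ‖z‖ = r := by simpa using hz
    have h1 := hδ z hz
    have h2 : ‖(ε : ℂ) • z‖ = ε * r := by
      rw [norm_smul, hzr, Complex.norm_real, Real.norm_of_nonneg hε0.le]
    have h3 : ‖G z‖ ≤ ‖G' z‖ + ‖(ε : ℂ) • z‖ := by
      have : G z = G' z - (ε : ℂ) • z := by simp [hG']
      rw [this]
      exact norm_sub_le _ _
    linarith
  have hy' : y ∈ ball (0 : Fin (n + 1) → ℂ) (δ - ε * r) := by
    have := lt_of_lt_of_le hεr (min_le_right _ _)
    rw [mem_ball_zero_iff]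
    linarith
  obtain ⟨z, hz, hzy⟩ := ball_subset_image_of_det hr hG'an (by simp [hG', h0]) hδ' hdet hy'
  refine ⟨G z, ⟨z, hz, rfl⟩, ?_⟩
  rw [← hzy, dist_eq_norm]
  have hzr : ‖z‖ ≤ r := by simpa using hz
  have : G' z - G z = (ε : ℂ) • z := by simp [hG']
  rw [this, norm_smul, Complex.norm_real, Real.norm_of_nonneg hε0.le]
  calc ε * ‖z‖ ≤ ε * r := by gcongr
    _ < e := lt_of_lt_of_le hεr (min_le_left _ _)

end Degree

/-! ### Hausdorff dimension of curve germs -/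

section Curves

open Metric Set

lemma not_countable_ball {k : ℕ} (hk : 0 < k) (c : Fin k → ℂ) {r : ℝ} (hr : 0 < r) :
    ¬ (ball c r).Countable := by
  intro h
  have h1 := h.dimH_zero
  rw [Real.dimH_of_nonempty_interior (by rw [isOpen_ball.interior_eq]; exact ⟨c, mem_ball_self hr⟩),
    finrank_real_fin] at h1
  have h2 : 2 * k = 0 := by exact_mod_cast h1
  omega

lemma IsPatch.not_countable {E : Type*} [NormedAddCommGroup E] [NormedSpace ℂ E] {k : ℕ}
    (hk : 0 < k) {P : Set E} (hP : IsPatch k P) : ¬ P.Countable := by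
  obtain ⟨φ, c, r, hr, hφ, hφi, rfl⟩ := hP
  intro h
  exact not_countable_ball hk c hr
    (countable_of_injective_of_countable_image hφi h)

lemma IsPatch.dimH_le {E : Type*} [NormedAddCommGroup E] [NormedSpace ℂ E] [CompleteSpace E] {k : ℕ}
    {P : Set E} (hP : IsPatch k P) : dimH P ≤ (2 * k : ℕ) := by
  obtain ⟨φ, c, r, hr, hφ, hφi, rfl⟩ := hP
  let _ : NormedSpace ℝ E := NormedSpace.restrictScalars ℝ ℂ E
  have : IsScalarTower ℝ ℂ E := RestrictScalars.isScalarTower ℝ ℂ E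
  have hcd : ContDiffOn ℝ 1 φ (ball c r) := fun s hs =>
    ((hφ s hs).restrictScalars (𝕜 := ℝ)).contDiffAt.contDiffWithinAt
  refine (hcd.dimH_image_le (convex_ball c r) Subset.rfl).trans ?_
  refine (dimH_mono (subset_univ _)).trans ?_
  rw [Real.dimH_univ_eq_finrank, finrank_real_fin]

/-- A patch on which some holomorphic function has countable fibres is at most a curve. -/
lemma IsPatch.le_one {N k : ℕ} {P V : Set (Fin N → ℂ)} (hP : IsPatch k P) (hPV : P ⊆ V)
    {t : (Fin N → ℂ) → ℂ} (ht : AnalyticOnNhd ℂ t V) (hfib : ∀ c, (P ∩ {x | t x = c}).Countable) :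
    k ≤ 1 := by
  by_contra hk
  obtain ⟨m, rfl⟩ : ∃ m, k = m + 1 + 1 := ⟨k - 2, by omega⟩
  have hP' := hP
  obtain ⟨φ, c, r, hr, hφ, hφi, rfl⟩ := hP
  have hτ : AnalyticOnNhd ℂ (fun s => t (φ s)) (ball c r) := fun s hs =>
    AnalyticAt.fun_comp (g := t) (ht _ (hPV ⟨s, hs, rfl⟩)) (hφ s hs)
  by_cases hall : ∀ s ∈ ball c r, fderiv ℂ (fun s => t (φ s)) s = 0
  · refine hP'.not_countable (by omega) ((hfib (t (φ c))).mono ?_)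
    rintro _ ⟨s, hs, rfl⟩
    exact ⟨⟨s, hs, rfl⟩, isOpen_ball.is_const_of_fderiv_eq_zero (convex_ball c r).isPreconnected
      hτ.differentiableOn hall hs (mem_ball_self hr)⟩
  · push Not at hall
    obtain ⟨s, hs, hne⟩ := hall
    obtain ⟨v, hv⟩ : ∃ v, fderiv ℂ (fun s => t (φ s)) s v ≠ 0 := by
      by_contra! h
      exact hne (ContinuousLinearMap.ext h)
    obtain ⟨j, hj⟩ := exists_single_ne_zero hv
    obtain ⟨R, hR, hRsub, -⟩ := exists_patch_of_fderiv_ne_zero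
      (g := fun x => t (φ x) - t (φ s)) ((hτ s hs).sub analyticAt_const) j
      (by rw [fderiv_sub_const]; exact hj) (by simp) (isOpen_ball.mem_nhds hs)
    refine hR.not_countable (by omega) ?_
    refine countable_of_injective_of_countable_image (hφi.mono fun x hx => (hRsub hx).1) ?_
    refine (hfib (t (φ s))).mono ?_
    rintro _ ⟨x, hx, rfl⟩
    exact ⟨⟨x, (hRsub hx).1, rfl⟩, sub_eq_zero.1 (hRsub hx).2⟩

variable {n : ℕ} {g : Fin n → (Fin (n + 1) → ℂ) → ℂ} {t : (Fin (n + 1) → ℂ) → ℂ}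

/-- A set cut out by `n` equations in `ℂⁿ⁺¹`, isolated by one further equation `t = 0`, is at most a
curve: the fibres of `t` on it are compact analytic sets, hence countable. -/
lemma dimH_curve_le (hg : ∀ i, AnalyticAt ℂ (g i) 0) (ht : AnalyticAt ℂ t 0) (ht0 : t 0 = 0)
    (hiso : ∀ᶠ x in 𝓝 (0 : Fin (n + 1) → ℂ), (∀ i, g i x = 0) → t x = 0 → x = 0) :
    ∃ U ∈ 𝓝 (0 : Fin (n + 1) → ℂ), dimH ({x | ∀ i, g i x = 0} ∩ U) ≤ 2 := by
  have hgood : ∀ᶠ x in 𝓝 (0 : Fin (n + 1) → ℂ), (∀ i, AnalyticAt ℂ (g i) x) ∧ AnalyticAt ℂ t x ∧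
      ((∀ i, g i x = 0) → t x = 0 → x = 0) :=
    (eventually_all.2 fun i => (hg i).eventually_analyticAt).and (ht.eventually_analyticAt.and hiso)
  obtain ⟨r, hr, hball⟩ := nhds_basis_closedBall.mem_iff.1 hgood
  have hgan : ∀ i, AnalyticOnNhd ℂ (g i) (closedBall 0 r) := fun i x hx => (hball hx).1 i
  have htan : AnalyticOnNhd ℂ t (closedBall 0 r) := fun x hx => (hball hx).2.1
  have hclosed : ∀ K ⊆ closedBall (0 : Fin (n + 1) → ℂ) r, IsCompact K →
      IsCompact {x ∈ K | ∀ i, g i x = 0} := by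
    intro K hK hKc
    have : {x ∈ K | ∀ i, g i x = 0} = K ∩ (fun x i => g i x) ⁻¹' {(0 : Fin n → ℂ)} := by
      ext x
      simp [funext_iff]
    rw [this]
    refine hKc.of_isClosed_subset (ContinuousOn.preimage_isClosed_of_isClosed ?_ hKc.isClosed
      isClosed_singleton) inter_subset_left
    exact continuousOn_pi.2 fun i => (hgan i).continuousOn.mono hK
  obtain ⟨m, hm, hmle⟩ := (hclosed (sphere 0 r) sphere_subset_closedBall
    (isCompact_sphere _ _)).exists_forall_le' (f := fun x => ‖t x‖) (a := 0)
    (htan.continuousOn.norm.mono fun x hx => sphere_subset_closedBall hx.1) (by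
      rintro x ⟨hxs, hx⟩
      rw [norm_pos_iff]
      intro htx
      have hx0 := (hball (sphere_subset_closedBall hxs)).2.2 hx htx
      rw [hx0] at hxs
      simp at hxs
      exact hr.ne hxs)
  set V := ball (0 : Fin (n + 1) → ℂ) r ∩ (fun x => ‖t x‖) ⁻¹' Iio m with hVdef
  have hVo : IsOpen V := (htan.continuousOn.mono ball_subset_closedBall).norm.isOpen_inter_preimage
    isOpen_ball isOpen_Iio
  have hVsub : V ⊆ closedBall 0 r := fun x hx => ball_subset_closedBall hx.1
  -- a fibre over `‖c‖ < m` misses the sphere, so it is compact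
  have hfib : ∀ c, ({x ∈ V | ∀ i, g i x = 0} ∩ {x | t x = c}).Countable := by
    intro c
    by_cases hc : ‖c‖ < m
    · have hset : {x ∈ V | ∀ i, g i x = 0} ∩ {x | t x = c} =
          {x ∈ V | ∀ o : Option (Fin n), o.elim (fun x => t x - c) g x = 0} := by
        ext x
        simp only [mem_inter_iff, mem_ofPred_eq, Option.forall, Option.elim_none, Option.elim_some,
          sub_eq_zero]
        tauto
      have hset2 : {x ∈ V | ∀ i, g i x = 0} ∩ {x | t x = c} =
          {x ∈ closedBall 0 r | ∀ i, g i x = 0} ∩ t ⁻¹' {c} := by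
        ext x
        constructor
        · rintro ⟨⟨hxV, hx⟩, hxc⟩
          exact ⟨⟨hVsub hxV, hx⟩, hxc⟩
        · rintro ⟨⟨hxV, hx⟩, hxc⟩
          have hxc' : t x = c := hxc
          refine ⟨⟨⟨?_, ?_⟩, hx⟩, hxc⟩
          · by_contra hxb
            have hxs : x ∈ sphere (0 : Fin (n + 1) → ℂ) r := by
              rw [mem_sphere]
              rw [mem_closedBall] at hxV
              rw [mem_ball, not_lt] at hxb
              exact le_antisymm hxV hxb
            have := hmle x ⟨hxs, hx⟩
            rw [hxc'] at this
            linarith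
          · show ‖t x‖ < m
            rw [hxc']; exact hc
      have hcomp := hclosed _ Subset.rfl (isCompact_closedBall (0 : Fin (n + 1) → ℂ) r)
      rw [hset]
      refine compact_analytic_countable hVo ?_ ?_
      · rintro (_ | i)
        · exact (htan.mono hVsub).sub analyticOnNhd_const
        · exact (hgan i).mono hVsub
      · rw [← hset, hset2]
        exact hcomp.of_isClosed_subset (ContinuousOn.preimage_isClosed_of_isClosed
          (htan.continuousOn.mono fun x hx => hx.1) hcomp.isClosed isClosed_singleton)
          inter_subset_left
    · refine Set.countable_empty.mono ?_
      rintro x ⟨⟨hxV, -⟩, rfl⟩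
      exact hc hxV.2
  obtain ⟨Ps, hc, hP, hcov⟩ := analytic_stratification (n + 1) V hVo g fun i => (hgan i).mono hVsub
  refine ⟨V, hVo.mem_nhds ⟨mem_ball_self hr, by simpa [ht0] using hm⟩, ?_⟩
  have hsub : {x | ∀ i, g i x = 0} ∩ V ⊆ ⋃₀ Ps := fun x hx => hcov ⟨hx.2, hx.1⟩
  refine (dimH_mono hsub).trans ?_
  rw [dimH_sUnion hc]
  refine iSup₂_le fun P hPm => ?_
  obtain ⟨⟨k, hk⟩, hPs⟩ := hP P hPm
  have hk1 : k ≤ 1 := hk.le_one (fun x hx => (hPs hx).1) (htan.mono hVsub) fun c =>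
    (hfib c).mono (inter_subset_inter_left _ hPs)
  refine hk.dimH_le.trans ?_
  exact_mod_cast (by omega : 2 * k ≤ 2)

/-- A set cut out by `n` equations in `ℂⁿ⁺¹`, isolated by one further equation `t = 0`, is at least a
curve near the origin: `t` takes all small values on it. -/
lemma le_dimH_curve (hg : ∀ i, AnalyticAt ℂ (g i) 0) (ht : AnalyticAt ℂ t 0)
    (hg0 : ∀ i, g i 0 = 0) (ht0 : t 0 = 0)
    (hiso : ∀ᶠ x in 𝓝 (0 : Fin (n + 1) → ℂ), (∀ i, g i x = 0) → t x = 0 → x = 0)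
    {U : Set (Fin (n + 1) → ℂ)} (hU : U ∈ 𝓝 (0 : Fin (n + 1) → ℂ)) :
    2 ≤ dimH ({x | ∀ i, g i x = 0} ∩ U) := by
  set W := interior U ∩ (⋂ i, {x | AnalyticAt ℂ (g i) x}) ∩ {x | AnalyticAt ℂ t x} with hW
  have hWo : IsOpen W := (isOpen_interior.inter
    (isOpen_iInter_of_finite fun i => isOpen_analyticAt ℂ (g i))).inter (isOpen_analyticAt ℂ t)
  have h0W : (0 : Fin (n + 1) → ℂ) ∈ W :=
    ⟨⟨mem_interior_iff_mem_nhds.2 hU, mem_iInter.2 hg⟩, ht⟩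
  obtain ⟨r, hr, hball⟩ := nhds_basis_closedBall.mem_iff.1 (inter_mem (hWo.mem_nhds h0W) hiso)
  set G : (Fin (n + 1) → ℂ) → (Fin (n + 1) → ℂ) := fun x => Fin.cons (t x) fun i => g i x with hG
  have hGan : AnalyticOnNhd ℂ G (closedBall 0 r) := by
    intro x hx
    rw [analyticAt_pi_iff]
    intro k
    refine Fin.cases ?_ (fun i => ?_) k
    · simpa [hG] using (hball hx).1.2
    · simpa [hG] using mem_iInter.1 (hball hx).1.1.2 i
  have hG0 : G 0 = 0 := by
    funext k
    refine Fin.cases ?_ (fun i => ?_) k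
    · simp [hG, ht0]
    · simp [hG, hg0]
  obtain ⟨δ, hδ, hδle⟩ := (isCompact_sphere (0 : Fin (n + 1) → ℂ) r).exists_forall_le'
    (f := fun x => ‖G x‖) (a := 0) (hGan.continuousOn.norm.mono sphere_subset_closedBall) (by
      intro x hxs
      rw [norm_pos_iff]
      intro hGx
      have hx0 := (hball (sphere_subset_closedBall hxs)).2
        (fun i => by simpa [hG] using congrFun hGx i.succ) (by simpa [hG] using congrFun hGx 0)
      rw [hx0] at hxs
      simp at hxs
      exact hr.ne hxs)
  have hsurj := ball_subset_image hr hGan hG0 hδle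
  have hval : ball (0 : ℂ) δ ⊆ t '' {x ∈ W | ∀ i, g i x = 0} := by
    intro c hc
    have hc' : (Fin.cons c 0 : Fin (n + 1) → ℂ) ∈ ball (0 : Fin (n + 1) → ℂ) δ := by
      rw [mem_ball_zero_iff] at hc ⊢
      rw [pi_norm_lt_iff hδ]
      intro k
      refine Fin.cases ?_ (fun i => ?_) k
      · simpa using hc
      · simpa using hδ
    obtain ⟨x, hx, hGx⟩ := hsurj hc'
    exact ⟨x, ⟨(hball hx).1, fun i => by simpa [hG] using congrFun hGx i.succ⟩,
      by simpa [hG] using congrFun hGx 0⟩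
  obtain ⟨Ps, hc, hP, hcov⟩ := analytic_stratification (n + 1) W hWo g
    fun i x hx => mem_iInter.1 hx.1.2 i
  obtain ⟨P, hPm, hPns⟩ : ∃ P ∈ Ps, ¬ P.Subsingleton := by
    by_contra! hall
    have hcount : {x ∈ W | ∀ i, g i x = 0}.Countable :=
      Countable.mono hcov (hc.sUnion fun P hPm => (hall P hPm).countable)
    have h1 := ((hcount.image t).mono hval).dimH_zero
    rw [Real.dimH_of_nonempty_interior
      (by rw [isOpen_ball.interior_eq]; exact ⟨0, mem_ball_self hδ⟩),
      Complex.finrank_real_complex] at h1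
    norm_num at h1
  obtain ⟨⟨k, φ, c, ρ, hρ, hφ, hφi, rfl⟩, hPs⟩ := hP P hPm
  simp only [Set.Subsingleton, not_forall] at hPns
  obtain ⟨_, ⟨s, hs, rfl⟩, _, ⟨s', hs', rfl⟩, hne⟩ := hPns
  obtain ⟨j, hj⟩ : ∃ j, φ s j ≠ φ s' j := by
    by_contra! h
    exact hne (funext h)
  have han : AnalyticOnNhd ℂ (fun s => φ s j) (ball c ρ) := fun s hs =>
    (analyticAt_pi_iff.1 (hφ s hs)) j
  have hopen : IsOpen ((fun x : Fin (n + 1) → ℂ => x j) '' (φ '' ball c ρ)) := by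
    rcases han.is_constant_or_isOpen (convex_ball c ρ).isPreconnected with ⟨w, hw⟩ | hopen
    · exact absurd ((hw s hs).trans (hw s' hs').symm) hj
    · rw [image_image]
      exact hopen _ Subset.rfl isOpen_ball
  have hdim : dimH ((fun x : Fin (n + 1) → ℂ => x j) '' (φ '' ball c ρ)) = 2 := by
    rw [Real.dimH_of_nonempty_interior
      (by rw [hopen.interior_eq]; exact ⟨_, _, ⟨s, hs, rfl⟩, rfl⟩), Complex.finrank_real_complex]
    norm_num
  rw [← hdim]
  have hlip : LipschitzWith 1 fun x : Fin (n + 1) → ℂ => x j := LipschitzWith.eval j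
  refine (hlip.dimH_image_le _).trans (dimH_mono fun x hx => ?_)
  exact ⟨(hPs hx).2, interior_subset (hPs hx).1.1.1⟩

/-- The two bounds on a curve germ, for a space linearly isomorphic to `ℂⁿ⁺¹`. -/
theorem dimH_curve {n : ℕ} {E : Type*} [NormedAddCommGroup E] [NormedSpace ℂ E]
    (e : (Fin (n + 1) → ℂ) ≃L[ℂ] E) {g : Fin n → E → ℂ} {t : E → ℂ}
    (hg : ∀ i, AnalyticAt ℂ (g i) 0) (ht : AnalyticAt ℂ t 0)
    (hg0 : ∀ i, g i 0 = 0) (ht0 : t 0 = 0)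
    (hiso : ∀ᶠ x in 𝓝 (0 : E), (∀ i, g i x = 0) → t x = 0 → x = 0) :
    (∃ U ∈ 𝓝 (0 : E), dimH ({x | ∀ i, g i x = 0} ∩ U) ≤ 2) ∧
      ∀ U ∈ 𝓝 (0 : E), 2 ≤ dimH ({x | ∀ i, g i x = 0} ∩ U) := by
  have hcomp : ∀ f : E → ℂ, AnalyticAt ℂ f 0 → AnalyticAt ℂ (fun x => f (e x)) 0 := by
    intro f hf
    refine AnalyticAt.fun_comp (g := f) ?_ (e.analyticAt 0)
    simpa using hf
  have hiso' : ∀ᶠ x in 𝓝 (0 : Fin (n + 1) → ℂ), (∀ i, g i (e x) = 0) → t (e x) = 0 → x = 0 := by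
    have hc : Tendsto e (𝓝 0) (𝓝 0) := by simpa using e.continuous.tendsto 0
    filter_upwards [hc.eventually hiso] with x hx h1 h2
    simpa using hx h1 h2
  have hdim : ∀ U : Set E, dimH ({x | ∀ i, g i x = 0} ∩ U) =
      dimH ({x | ∀ i, g i (e x) = 0} ∩ e ⁻¹' U) := by
    intro U
    rw [← e.dimH_preimage]
    rfl
  constructor
  · obtain ⟨U, hU, hle⟩ := dimH_curve_le (fun i => hcomp _ (hg i)) (hcomp _ ht)
      (by simpa using ht0) hiso'
    refine ⟨e '' U, ?_, ?_⟩
    · have := e.toHomeomorph.isOpenMap.image_mem_nhds hU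
      simpa using this
    · rw [hdim, preimage_image_eq _ e.injective]
      exact hle
  · intro U hU
    rw [hdim]
    refine le_dimH_curve (fun i => hcomp _ (hg i)) (hcomp _ ht) (fun i => by simpa using hg0 i)
      (by simpa using ht0) hiso' ?_
    exact e.continuous.continuousAt.preimage_mem_nhds (by simpa using hU)

end Curves

/-! ### Weighted dilations and leading parts -/

section Weighted

open Metric Set

/-- The weighted dilation `(z₁, z₂) ↦ (l ^ a z₁, l ^ b z₂)` of `ℂ²`. -/
noncomputable def dil (a b : ℕ) (l : ℂ) (z : Fin 2 → ℂ) : Fin 2 → ℂ :=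
  fun i => l ^ (if i = 0 then a else b) * z i

/-- The weighted dilation acting on both factors of `ℂ² × ℂ²`. -/
noncomputable def dil₂ (a b : ℕ) (l : ℂ) (q : (Fin 2 → ℂ) × (Fin 2 → ℂ)) :
    (Fin 2 → ℂ) × (Fin 2 → ℂ) :=
  (dil a b l q.1, dil a b l q.2)

lemma contDiff_dil₂ (a b : ℕ) :
    ContDiff ℂ ⊤ (fun x : ℂ × ((Fin 2 → ℂ) × (Fin 2 → ℂ)) => dil₂ a b x.1 x.2) := by
  unfold dil₂ dil
  fun_prop

lemma dil_add_smul (a b : ℕ) (l s : ℂ) (z e : Fin 2 → ℂ) :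
    dil a b l (z + s • e) = dil a b l z + s • dil a b l e := by
  funext i
  simp only [dil, Pi.add_apply, Pi.smul_apply, smul_eq_mul]
  ring

lemma dil₂_add_smul (a b : ℕ) (l s : ℂ) (q e : (Fin 2 → ℂ) × (Fin 2 → ℂ)) :
    dil₂ a b l (q + s • e) = dil₂ a b l q + s • dil₂ a b l e := by
  simp [dil₂, dil_add_smul]

lemma dil_dil (a b : ℕ) (l m : ℂ) (z : Fin 2 → ℂ) :
    dil a b l (dil a b m z) = dil a b (l * m) z := by
  funext i
  simp only [dil, mul_pow]
  ring

lemma dil_one (a b : ℕ) (z : Fin 2 → ℂ) : dil a b 1 z = z := by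
  funext i
  simp [dil]

lemma dil_zero {a b : ℕ} (ha : 0 < a) (hb : 0 < b) (z : Fin 2 → ℂ) : dil a b 0 z = 0 := by
  funext i
  have : (if i = 0 then a else b) ≠ 0 := by split_ifs <;> omega
  rw [dil, zero_pow this, zero_mul]
  rfl

lemma dil₂_zero {a b : ℕ} (ha : 0 < a) (hb : 0 < b) (q : (Fin 2 → ℂ) × (Fin 2 → ℂ)) :
    dil₂ a b 0 q = 0 := by
  simp [dil₂, dil_zero ha hb]

lemma star_dil (a b : ℕ) (l : ℝ) (z : Fin 2 → ℂ) :
    star (dil a b l z) = dil a b l (star z) := by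
  funext i
  simp only [dil, Pi.star_apply, star_mul', star_pow, Complex.star_def, Complex.conj_ofReal]

lemma le_norm_dil {a b : ℕ} (ha : 0 < a) (hb : 0 < b) {μ : ℝ} (hμ : 1 ≤ μ) (z : Fin 2 → ℂ) :
    μ * ‖z‖ ≤ ‖dil a b μ z‖ := by
  obtain ⟨i, hi⟩ : ∃ i, ‖z‖ = ‖z i‖ := by
    obtain ⟨i, -, hi⟩ := Finset.exists_max_image (Finset.univ : Finset (Fin 2)) (fun i => ‖z i‖)
      Finset.univ_nonempty
    exact ⟨i, le_antisymm ((pi_norm_le_iff_of_nonneg (norm_nonneg _)).2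
      fun j => hi j (Finset.mem_univ j)) (norm_le_pi_norm z i)⟩
  refine le_trans ?_ (norm_le_pi_norm _ i)
  have hw : (if i = 0 then a else b) ≠ 0 := by split_ifs <;> omega
  rw [dil, norm_mul, norm_pow, Complex.norm_real, Real.norm_of_nonneg (by linarith), hi]
  exact mul_le_mul_of_nonneg_right (le_self_pow₀ hμ hw) (norm_nonneg _)

/-- Every small nonzero point is `l · q` with `q` on the unit sphere and `l > 0` small. -/
lemma exists_dil₂ {a b : ℕ} (ha : 0 < a) (hb : 0 < b) {ε : ℝ} (hε : 0 < ε) :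
    ∀ᶠ p in 𝓝 (0 : (Fin 2 → ℂ) × (Fin 2 → ℂ)), p ≠ 0 →
      ∃ (l : ℝ) (q : (Fin 2 → ℂ) × (Fin 2 → ℂ)), 0 < l ∧ l ≤ ε ∧ ‖q‖ = 1 ∧ dil₂ a b l q = p := by
  have hcont : Continuous fun x : ℂ × ((Fin 2 → ℂ) × (Fin 2 → ℂ)) => dil₂ a b x.1 x.2 :=
    (contDiff_dil₂ a b).continuous
  have hc1 : Continuous fun p : (Fin 2 → ℂ) × (Fin 2 → ℂ) => ‖dil₂ a b ((ε⁻¹ : ℝ) : ℂ) p‖ :=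
    (hcont.comp (by fun_prop : Continuous fun p => (((ε⁻¹ : ℝ) : ℂ), p))).norm
  have h0 : ‖dil₂ a b ((ε⁻¹ : ℝ) : ℂ) 0‖ < 1 := by
    have : dil₂ a b ((ε⁻¹ : ℝ) : ℂ) 0 = 0 := by
      ext i <;> simp [dil₂, dil]
    rw [this]; simp
  filter_upwards [hc1.continuousAt.eventually_lt continuousAt_const h0] with p hp hp0
  have hpn : 0 < ‖p‖ := norm_pos_iff.2 hp0
  set R := max ε⁻¹ (max 1 ‖p‖⁻¹) with hR
  have hR1 : 1 ≤ R := (le_max_left _ _).trans (le_max_right _ _)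
  have hRp : 1 ≤ ‖dil₂ a b (R : ℂ) p‖ := by
    have h1 : R * ‖p‖ ≤ ‖dil₂ a b (R : ℂ) p‖ := by
      rcases le_total ‖p.1‖ ‖p.2‖ with h | h
      · rw [Prod.norm_def p, max_eq_right h]
        exact (le_norm_dil ha hb hR1 p.2).trans (le_max_right _ _)
      · rw [Prod.norm_def p, max_eq_left h]
        exact (le_norm_dil ha hb hR1 p.1).trans (le_max_left _ _)
    have h2 : ‖p‖⁻¹ ≤ R := (le_max_right _ _).trans (le_max_right _ _)
    calc (1 : ℝ) = ‖p‖⁻¹ * ‖p‖ := (inv_mul_cancel₀ hpn.ne').symm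
      _ ≤ R * ‖p‖ := by gcongr
      _ ≤ _ := h1
  have hc2 : Continuous fun μ : ℝ => ‖dil₂ a b (μ : ℂ) p‖ :=
    (hcont.comp (by fun_prop : Continuous fun μ : ℝ => ((μ : ℂ), p))).norm
  obtain ⟨μ, ⟨hμ1, -⟩, hμ⟩ := intermediate_value_Icc (le_max_left ε⁻¹ (max 1 ‖p‖⁻¹))
    hc2.continuousOn ⟨hp.le, hRp⟩
  have hμ0 : 0 < μ := lt_of_lt_of_le (inv_pos.2 hε) hμ1
  refine ⟨μ⁻¹, dil₂ a b (μ : ℂ) p, inv_pos.2 hμ0, inv_le_of_inv_le₀ hε hμ1, hμ, ?_⟩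
  have hne : (μ : ℂ) ≠ 0 := by exact_mod_cast hμ0.ne'
  simp [dil₂, dil_dil, inv_mul_cancel₀ hne, dil_one]

/-- If the weighted leading parts `P j` of the functions `f j` have no common zero on the unit
sphere, then the origin is an isolated common zero of the `f j`. -/
lemma isolated_of_leading {a b : ℕ} (ha : 0 < a) (hb : 0 < b) {ι : Type} [Fintype ι]
    {f P : ι → (Fin 2 → ℂ) × (Fin 2 → ℂ) → ℂ} (hP : ∀ j, Continuous (P j))
    (hest : ∀ j, ∃ (m D : ℕ) (C l₀ : ℝ), 0 < l₀ ∧ ∀ l : ℝ, 0 < l → l ≤ l₀ → ∀ q, ‖q‖ ≤ 1 →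
      ‖(l : ℂ) ^ m * f j (dil₂ a b l q) - (l : ℂ) ^ D * P j q‖ ≤ C * l ^ (D + 1))
    (hzero : ∀ q, (∀ j, P j q = 0) → q = 0) :
    ∀ᶠ p in 𝓝 (0 : (Fin 2 → ℂ) × (Fin 2 → ℂ)), (∀ j, f j p = 0) → p = 0 := by
  obtain ⟨η, hη, hηle⟩ := (isCompact_sphere (0 : (Fin 2 → ℂ) × (Fin 2 → ℂ)) 1).exists_forall_le'
    (f := fun q => ∑ j, ‖P j q‖) (a := 0) (by fun_prop) (by
      intro q hq
      refine lt_of_le_of_ne (Finset.sum_nonneg fun j _ => norm_nonneg _) fun h => ?_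
      have h1 := (Finset.sum_eq_zero_iff_of_nonneg fun j _ => norm_nonneg (P j q)).1 h.symm
      have hq0 := hzero q fun j => norm_eq_zero.1 (h1 j (Finset.mem_univ j))
      rw [hq0] at hq
      simp at hq)
  choose m D C l₀ hl₀ hest using hest
  have hsmall : ∀ᶠ l : ℝ in 𝓝[>] 0, 0 < l ∧ (∀ j, l ≤ l₀ j) ∧ (∑ j, C j) * l < η := by
    refine (eventually_mem_nhdsWithin).and (nhdsWithin_le_nhds ?_)
    refine (eventually_all.2 fun j => eventually_le_nhds (hl₀ j)).and ?_
    have hc : Continuous fun l : ℝ => (∑ j, C j) * l := by fun_prop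
    exact hc.continuousAt.eventually_lt continuousAt_const (by simpa using hη)
  obtain ⟨ε, hε, hεj, hεη⟩ := hsmall.exists
  filter_upwards [exists_dil₂ ha hb hε] with p hp hfp
  by_contra hp0
  obtain ⟨l, q, hl, hlε, hq, rfl⟩ := hp hp0
  have hb : ∀ j, ‖P j q‖ ≤ C j * l := by
    intro j
    have h1 := hest j l hl (hlε.trans (hεj j)) q hq.le
    rw [hfp j, mul_zero, zero_sub, norm_neg, norm_mul, norm_pow, Complex.norm_real,
      Real.norm_of_nonneg hl.le, pow_succ] at h1
    have h2 : 0 < l ^ D j := pow_pos hl _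
    have h3 : l ^ D j * ‖P j q‖ ≤ l ^ D j * (C j * l) := by linarith
    exact le_of_mul_le_mul_left h3 h2
  have h1 : η ≤ (∑ j, C j) * l := by
    refine (hηle q (by simpa using hq)).trans ?_
    rw [Finset.sum_mul]
    exact Finset.sum_le_sum fun j _ => hb j
  have hCnn : 0 ≤ ∑ j, C j := Finset.sum_nonneg fun j _ =>
    nonneg_of_mul_nonneg_left ((norm_nonneg _).trans (hb j)) hl
  have h2 : (∑ j, C j) * l ≤ (∑ j, C j) * ε := mul_le_mul_of_nonneg_left hlε hCnn
  linarith

/-- If `f(l) = o(l ^ d)` along positive reals, then `f` vanishes to order at least `d + 1`. -/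
lemma order_of_tendsto {f : ℂ → ℂ} (hf : AnalyticAt ℂ f 0) {d : ℕ}
    (ht : Tendsto (fun l : ℝ => f l / (l : ℂ) ^ d) (𝓝[>] 0) (𝓝 0)) :
    ((d + 1 : ℕ) : ℕ∞) ≤ analyticOrderAt f 0 := by
  by_contra hlt
  rw [not_le] at hlt
  obtain ⟨m, hm⟩ := ENat.ne_top_iff_exists.1 hlt.ne_top
  rw [← hm] at hlt
  have hmd : m ≤ d := by
    have : m < d + 1 := by exact_mod_cast hlt
    omega
  obtain ⟨g, hg, hg0, hfg⟩ := hf.analyticOrderAt_eq_natCast.1 hm.symm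
  have hcoe : Tendsto (fun l : ℝ => (l : ℂ)) (𝓝[>] 0) (𝓝 0) := by
    have : Tendsto (fun l : ℝ => (l : ℂ)) (𝓝 0) (𝓝 0) := by
      simpa using Complex.continuous_ofReal.tendsto 0
    exact this.mono_left nhdsWithin_le_nhds
  have h1 : Tendsto (fun l : ℝ => g l) (𝓝[>] 0) (𝓝 (g 0)) := hg.continuousAt.tendsto.comp hcoe
  have h2 : Tendsto (fun l : ℝ => f l / (l : ℂ) ^ d * (l : ℂ) ^ (d - m)) (𝓝[>] 0) (𝓝 0) := by
    simpa using ht.mul (hcoe.pow (d - m))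
  have h3 : (fun l : ℝ => f l / (l : ℂ) ^ d * (l : ℂ) ^ (d - m)) =ᶠ[𝓝[>] 0] fun l => g l := by
    filter_upwards [hcoe.eventually hfg, self_mem_nhdsWithin] with l hl hl0
    have hne : (l : ℂ) ≠ 0 := by
      have : l ≠ 0 := ne_of_gt hl0
      exact_mod_cast this
    rw [hl, sub_zero, smul_eq_mul]
    have hsplit : (l : ℂ) ^ d = (l : ℂ) ^ m * (l : ℂ) ^ (d - m) := by
      rw [← pow_add]; congr 1; omega
    rw [hsplit]
    field_simp
  exact hg0 (tendsto_nhds_unique h1 (h2.congr' h3))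

/-- An entire function vanishing at the points `(z, z̄)` with `z` small vanishes identically:
`{(z, z̄)}` is maximally totally real. -/
lemma eq_zero_of_totally_real {c : (Fin 2 → ℂ) × (Fin 2 → ℂ) → ℂ} (hc : AnalyticOnNhd ℂ c univ)
    {r : ℝ} (hr : 0 < r) (h : ∀ z, ‖z‖ < r → c (z, star z) = 0) : c = 0 := by
  refine hc.eq_of_eventuallyEq (z₀ := 0) analyticOnNhd_const ?_
  filter_upwards [ball_mem_nhds 0 hr] with p hp
  obtain ⟨z, w⟩ := p
  set u : Fin 2 → ℂ := (2⁻¹ : ℂ) • (z + star w) with hu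
  set v : Fin 2 → ℂ := (-(Complex.I) * 2⁻¹) • (z - star w) with hv
  have hzw : ‖z‖ < r ∧ ‖w‖ < r := by
    rw [mem_ball_zero_iff, Prod.norm_def] at hp
    exact ⟨(le_max_left _ _).trans_lt hp, (le_max_right _ _).trans_lt hp⟩
  have hur : ‖u‖ < r := by
    rw [hu, norm_smul]
    have h1 := norm_add_le z (star w)
    rw [norm_star] at h1
    have h2 : ‖(2⁻¹ : ℂ)‖ = 2⁻¹ := by simp
    rw [h2]
    linarith
  set γ : ℂ → (Fin 2 → ℂ) × (Fin 2 → ℂ) := fun s => (u + s • v, star u + s • star v) with hγ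
  have hγan : AnalyticOnNhd ℂ γ univ := by
    have : ContDiff ℂ ⊤ γ := by
      rw [hγ]; fun_prop
    exact fun s _ => this.contDiffAt.analyticAt
  have hcγ : AnalyticOnNhd ℂ (fun s => c (γ s)) univ := fun s _ =>
    AnalyticAt.fun_comp (g := c) (hc _ (mem_univ _)) (hγan s (mem_univ _))
  have hreal : ∀ᶠ s : ℝ in 𝓝[>] 0, c (γ (s : ℂ)) = 0 := by
    have hcont : Continuous fun s : ℝ => ‖u + (s : ℂ) • v‖ := by fun_prop
    have hev := hcont.continuousAt.eventually_lt (x₀ := 0) continuousAt_const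
      (show ‖u + ((0 : ℝ) : ℂ) • v‖ < r by simpa using hur)
    filter_upwards [nhdsWithin_le_nhds hev] with s hs
    have := h _ hs
    have hst : star (u + (s : ℂ) • v) = star u + (s : ℂ) • star v := by
      funext i; simp
    rw [hst] at this
    exact this
  have hfreq : ∃ᶠ s in 𝓝[≠] (0 : ℂ), c (γ s) = 0 := by
    have htend : Tendsto (fun s : ℝ => (s : ℂ)) (𝓝[>] 0) (𝓝[≠] 0) := by
      refine tendsto_nhdsWithin_iff.2 ⟨?_, ?_⟩
      · have : Tendsto (fun l : ℝ => (l : ℂ)) (𝓝 0) (𝓝 0) := by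
          simpa using Complex.continuous_ofReal.tendsto 0
        exact this.mono_left nhdsWithin_le_nhds
      · filter_upwards [self_mem_nhdsWithin] with s hs
        have : s ≠ 0 := ne_of_gt hs
        simpa using this
    exact htend.frequently hreal.frequently
  have hzero := hcγ.eq_of_frequently_eq analyticOnNhd_const hfreq
  have hI := congrFun hzero Complex.I
  have hγI : γ Complex.I = (z, w) := by
    have hI2 := Complex.I_mul_I
    ext i
    · simp only [hγ, hu, hv, Pi.add_apply, Pi.smul_apply, Pi.sub_apply, Pi.star_apply, smul_eq_mul]
      linear_combination (-(2⁻¹ : ℂ) * (z i - star (w i))) * hI2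
    · simp only [hγ, hu, hv, Pi.add_apply, Pi.smul_apply, Pi.sub_apply, Pi.star_apply, smul_eq_mul,
        star_mul', star_add, star_sub, star_neg, Complex.star_def, Complex.conj_I,
        map_inv₀, Complex.conj_ofNat, Complex.conj_conj]
      linear_combination ((2⁻¹ : ℂ) * ((starRingEnd ℂ) (z i) - w i)) * hI2
  simpa [hγI] using hI

/-- Taylor's inequality at a zero of order `d + 1`, by iterating the mean value inequality. -/
lemma taylor_bound {D : ℕ → ℂ → ℂ} {d : ℕ} {l₀ C : ℝ}
    (hD : ∀ k l, ‖l‖ ≤ l₀ → HasDerivAt (D k) (D (k + 1) l) l) (h0 : ∀ k ≤ d, D k 0 = 0)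
    (hC : ∀ l, ‖l‖ ≤ l₀ → ‖D (d + 1) l‖ ≤ C) {l : ℂ} (hl : ‖l‖ ≤ l₀) :
    ‖D 0 l‖ ≤ C * ‖l‖ ^ (d + 1) := by
  have hC0 : 0 ≤ C := (norm_nonneg _).trans (hC l hl)
  have key : ∀ j ≤ d + 1, ∀ l, ‖l‖ ≤ l₀ → ‖D (d + 1 - j) l‖ ≤ C * ‖l‖ ^ j := by
    intro j
    induction j with
    | zero => intro _ l hl; simpa using hC l hl
    | succ j ih =>
      intro hj l hl
      have heq : d + 1 - j = (d + 1 - (j + 1)) + 1 := by omega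
      have hder : ∀ x ∈ closedBall (0 : ℂ) ‖l‖, HasDerivWithinAt (D (d + 1 - (j + 1)))
          (D (d + 1 - j) x) (closedBall 0 ‖l‖) x := by
        intro x hx
        rw [heq]
        exact (hD _ x ((mem_closedBall_zero_iff.1 hx).trans hl)).hasDerivWithinAt
      have hbd : ∀ x ∈ closedBall (0 : ℂ) ‖l‖, ‖D (d + 1 - j) x‖ ≤ C * ‖l‖ ^ j := by
        intro x hx
        have hx' := mem_closedBall_zero_iff.1 hx
        refine (ih (by omega) x (hx'.trans hl)).trans ?_
        gcongr
      have := (convex_closedBall (0 : ℂ) ‖l‖).norm_image_sub_le_of_norm_hasDerivWithin_le hder hbd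
        (x := 0) (y := l) (by simp) (by simp)
      rw [h0 _ (by omega), sub_zero, sub_zero] at this
      rw [pow_succ, ← mul_assoc]
      exact this
  simpa using key (d + 1) le_rfl l hl

end Weighted

/-! ### Weighted estimates of the remainder -/

section Remainder

open Metric Set

/-- A holomorphic function `Φ(s, q)` whose `s`-derivatives of order at most `d` vanish along `s = 0`
is `O(l ^ (d + 1))`, uniformly for bounded `q`. -/
lemma uniform_taylor_bound {X : Type*} [NormedAddCommGroup X] [NormedSpace ℂ X] [ProperSpace X]
    {Φ : ℂ × X → ℂ} {Ω : Set (ℂ × X)} (hΩo : IsOpen Ω) (hΩ0 : ∀ q : X, ((0 : ℂ), q) ∈ Ω)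
    (hΦan : AnalyticOnNhd ℂ Φ Ω) {d : ℕ}
    (hcoef : ∀ k ≤ d, ∀ q : X, (dirD ((1 : ℂ), (0 : X)))^[k] Φ (0, q) = 0) :
    ∃ C l₀ : ℝ, 0 < l₀ ∧ ∀ l : ℝ, 0 < l → l ≤ l₀ → ∀ q : X, ‖q‖ ≤ 2 →
      ((l : ℂ), q) ∈ Ω ∧ ‖Φ ((l : ℂ), q)‖ ≤ C * l ^ (d + 1) := by
  have hDan : ∀ k, AnalyticOnNhd ℂ ((dirD ((1 : ℂ), (0 : X)))^[k] Φ) Ω :=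
    fun k => dirD_iterate_analytic hΦan k
  obtain ⟨u, v, huo, -, h0u, hv, huv⟩ := generalized_tube_lemma (isCompact_singleton (x := (0 : ℂ)))
    (isCompact_closedBall (0 : X) 2) hΩo (by
      rintro ⟨s, q⟩ ⟨hs, -⟩
      rw [mem_singleton_iff] at hs
      subst hs
      exact hΩ0 q)
  obtain ⟨l₀, hl₀, hl₀u⟩ := nhds_basis_closedBall.mem_iff.1
    (huo.mem_nhds (h0u (mem_singleton (0 : ℂ))))
  have hsub : closedBall (0 : ℂ) l₀ ×ˢ closedBall (0 : X) 2 ⊆ Ω := (prod_mono hl₀u hv).trans huv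
  obtain ⟨C, hC⟩ := ((isCompact_closedBall (0 : ℂ) l₀).prod
    (isCompact_closedBall (0 : X) 2)).exists_bound_of_continuousOn
    ((hDan (d + 1)).continuousOn.mono hsub)
  refine ⟨C, l₀, hl₀, fun l hl hll q hq => ?_⟩
  have hq' : q ∈ closedBall (0 : X) 2 := by simpa using hq
  have hnl : ‖(l : ℂ)‖ = l := by rw [Complex.norm_real, Real.norm_of_nonneg hl.le]
  have hl' : (l : ℂ) ∈ closedBall (0 : ℂ) l₀ := by rw [mem_closedBall_zero_iff, hnl]; exact hll
  refine ⟨hsub (mk_mem_prod hl' hq'), ?_⟩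
  have hT := taylor_bound (D := fun k s => (dirD ((1 : ℂ), (0 : X)))^[k] Φ (s, q)) (d := d)
    (l₀ := l₀) (C := C) ?_ (fun k hk => hcoef k hk q) ?_ (l := (l : ℂ)) (by rw [hnl]; exact hll)
  · rw [hnl] at hT
    exact hT
  · intro k s hs
    have hmem : (s, q) ∈ Ω := hsub ⟨by simpa using hs, hq'⟩
    have h1 := (hDan k _ hmem).differentiableAt.hasFDerivAt
    have h2 : HasDerivAt (fun s : ℂ => (s, q)) ((1 : ℂ), (0 : X)) s :=
      (hasDerivAt_id s).prodMk (hasDerivAt_const s q)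
    have h3 := h1.comp_hasDerivAt s h2
    simp only [Function.iterate_succ_apply']
    exact h3
  · intro s hs
    exact hC (s, q) ⟨by simpa using hs, hq'⟩

/-- If `h(l·z, l·z̄) = o(l ^ d)` for all small `z`, then the power series of `h` at `0` has no terms
of weighted degree at most `d`, whence a uniform bound `O(l ^ (d + 1))` on `h(l·q)`. -/
lemma weighted_bound {a b : ℕ} (ha : 0 < a) (hb : 0 < b) {d : ℕ}
    {h : (Fin 2 → ℂ) × (Fin 2 → ℂ) → ℂ} (hh : AnalyticAt ℂ h 0) {r : ℝ} (hr : 0 < r)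
    (hord : ∀ z, ‖z‖ < r → Tendsto (fun l : ℝ => h (dil a b l z, star (dil a b l z)) / (l : ℂ) ^ d)
      (𝓝[>] 0) (𝓝 0)) :
    ∃ C l₀ : ℝ, 0 < l₀ ∧ ∀ l : ℝ, 0 < l → l ≤ l₀ → ∀ q, ‖q‖ ≤ 2 →
      AnalyticAt ℂ h (dil₂ a b l q) ∧ ‖h (dil₂ a b l q)‖ ≤ C * l ^ (d + 1) := by
  have hΩo : IsOpen {x : ℂ × ((Fin 2 → ℂ) × (Fin 2 → ℂ)) | AnalyticAt ℂ h (dil₂ a b x.1 x.2)} :=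
    (isOpen_analyticAt ℂ h).preimage (contDiff_dil₂ a b).continuous
  have hΩ0 : ∀ q : (Fin 2 → ℂ) × (Fin 2 → ℂ), ((0 : ℂ), q) ∈
      {x : ℂ × ((Fin 2 → ℂ) × (Fin 2 → ℂ)) | AnalyticAt ℂ h (dil₂ a b x.1 x.2)} := by
    intro q
    show AnalyticAt ℂ h (dil₂ a b 0 q)
    rw [dil₂_zero ha hb]
    exact hh
  have hΦan : AnalyticOnNhd ℂ (fun x : ℂ × ((Fin 2 → ℂ) × (Fin 2 → ℂ)) => h (dil₂ a b x.1 x.2))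
      {x | AnalyticAt ℂ h (dil₂ a b x.1 x.2)} := fun x hx =>
    AnalyticAt.fun_comp (g := h) hx (contDiff_dil₂ a b).contDiffAt.analyticAt
  refine uniform_taylor_bound hΩo hΩ0 hΦan fun k hk => ?_
  generalize hΦ : (fun x : ℂ × ((Fin 2 → ℂ) × (Fin 2 → ℂ)) => h (dil₂ a b x.1 x.2)) = Φ at hΦan ⊢
  generalize hΩ : {x : ℂ × ((Fin 2 → ℂ) × (Fin 2 → ℂ)) | AnalyticAt ℂ h (dil₂ a b x.1 x.2)} = Ω
    at hΩo hΩ0 hΦan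
  have hΦ' : ∀ s q, Φ (s, q) = h (dil₂ a b s q) := fun s q => by rw [← hΦ]
  -- the coefficients of weighted degree at most `d` vanish on the totally real set `w = z̄`
  have hcan : AnalyticOnNhd ℂ (fun q : (Fin 2 → ℂ) × (Fin 2 → ℂ) =>
      (dirD ((1 : ℂ), (0 : (Fin 2 → ℂ) × (Fin 2 → ℂ))))^[k] Φ ((0 : ℂ), q)) univ := by
    intro q _
    have h1 : AnalyticAt ℂ (fun q : (Fin 2 → ℂ) × (Fin 2 → ℂ) => ((0 : ℂ), q)) q :=
      analyticAt_const.prod analyticAt_id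
    exact AnalyticAt.fun_comp (dirD_iterate_analytic hΦan k _ (hΩ0 q)) h1
  have hz : (fun q : (Fin 2 → ℂ) × (Fin 2 → ℂ) =>
      (dirD ((1 : ℂ), (0 : (Fin 2 → ℂ) × (Fin 2 → ℂ))))^[k] Φ ((0 : ℂ), q)) = 0 := by
    refine eq_zero_of_totally_real hcan hr fun z hz => ?_
    have hfan : AnalyticAt ℂ (fun s : ℂ => Φ (s, (z, star z))) 0 := by
      have h1 : AnalyticAt ℂ (fun s : ℂ => (s, (z, star z))) 0 :=
        analyticAt_id.prod analyticAt_const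
      exact AnalyticAt.fun_comp (g := Φ) (f := fun s : ℂ => (s, (z, star z)))
        (hΦan ((0 : ℂ), (z, star z)) (hΩ0 _)) h1
    have hlim : Tendsto (fun l : ℝ => Φ ((l : ℂ), (z, star z)) / (l : ℂ) ^ d)
        (𝓝[>] 0) (𝓝 0) := by
      refine (hord z hz).congr fun l => ?_
      rw [star_dil, hΦ']
      rfl
    have hvan := (natCast_le_analyticOrderAt_iff_iteratedDeriv_eq_zero hfan).1
      (order_of_tendsto hfan hlim) k (by omega)
    have hline : ∀ s : ℂ, ((0 : ℂ), (z, star z)) +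
        s • ((1 : ℂ), (0 : (Fin 2 → ℂ) × (Fin 2 → ℂ))) = (s, (z, star z)) := by
      intro s
      simp
    have hit := iteratedDeriv_line (v := ((1 : ℂ), (0 : (Fin 2 → ℂ) × (Fin 2 → ℂ))))
      (y := ((0 : ℂ), (z, star z))) hΩo hΦan k 0 (by rw [hline]; exact hΩ0 _)
    simp only [hline] at hit
    exact hit.symm.trans hvan
  exact fun q => congrFun hz q

lemma hasDerivAt_dil₂_line {a b : ℕ} {f : (Fin 2 → ℂ) × (Fin 2 → ℂ) → ℂ} {l : ℂ}
    {q e : (Fin 2 → ℂ) × (Fin 2 → ℂ)} {s : ℂ}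
    (hf : DifferentiableAt ℂ f (dil₂ a b l (q + s • e))) :
    HasDerivAt (fun s : ℂ => f (dil₂ a b l (q + s • e)))
      (fderiv ℂ f (dil₂ a b l (q + s • e)) (dil₂ a b l e)) s := by
  have h2 : HasDerivAt (fun s : ℂ => dil₂ a b l (q + s • e)) (dil₂ a b l e) s := by
    simp only [dil₂_add_smul]
    simpa using ((hasDerivAt_id s).smul_const (dil₂ a b l e)).const_add (dil₂ a b l q)
  exact hf.hasFDerivAt.comp_hasDerivAt s h2

/-- Cauchy's estimate turns the bound on `h` into one on its weighted derivatives. -/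
lemma weighted_deriv_bound {a b : ℕ} {d : ℕ} {h : (Fin 2 → ℂ) × (Fin 2 → ℂ) → ℂ} {C l : ℝ}
    (hbd : ∀ q, ‖q‖ ≤ 2 →
      AnalyticAt ℂ h (dil₂ a b l q) ∧ ‖h (dil₂ a b l q)‖ ≤ C * l ^ (d + 1))
    {q e : (Fin 2 → ℂ) × (Fin 2 → ℂ)} (hq : ‖q‖ ≤ 1) (he : ‖e‖ ≤ 1) :
    ‖fderiv ℂ h (dil₂ a b l q) (dil₂ a b l e)‖ ≤ C * l ^ (d + 1) := by
  have hn : ∀ s : ℂ, ‖s‖ ≤ 1 → ‖q + s • e‖ ≤ 2 := by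
    intro s hs
    have h1 := norm_add_le q (s • e)
    rw [norm_smul] at h1
    nlinarith [norm_nonneg s, norm_nonneg e]
  have hd : ∀ s : ℂ, ‖s‖ ≤ 1 → HasDerivAt (fun s : ℂ => h (dil₂ a b l (q + s • e)))
      (fderiv ℂ h (dil₂ a b l (q + s • e)) (dil₂ a b l e)) s := fun s hs =>
    hasDerivAt_dil₂_line (hbd _ (hn s hs)).1.differentiableAt
  have hdc : DiffContOnCl ℂ (fun s : ℂ => h (dil₂ a b l (q + s • e))) (ball 0 1) := by
    refine DifferentiableOn.diffContOnCl fun s hs => ?_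
    rw [closure_ball _ one_ne_zero] at hs
    exact (hd s (by simpa using hs)).differentiableAt.differentiableWithinAt
  have := Complex.norm_deriv_le_of_forall_mem_sphere_norm_le one_pos hdc
    (C := C * l ^ (d + 1)) fun s hs => (hbd _ (hn s (by simpa using (mem_sphere.1 hs).le))).2
  rw [(hd 0 (by simp)).deriv] at this
  simpa using this

end Remainder

/-! ### Quasihomogeneous polynomials -/

section Polynomial

open MvPolynomial

lemma hasFDerivAt_eval (Q : MvPolynomial (Fin 2) ℂ) (z : Fin 2 → ℂ) :
    HasFDerivAt (fun z => eval z Q)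
      (∑ i, eval z (pderiv i Q) • ContinuousLinearMap.proj (R := ℂ) (φ := fun _ : Fin 2 => ℂ) i) z := by
  induction Q using MvPolynomial.induction_on with
  | C c =>
    simp only [eval_C]
    refine (hasFDerivAt_const (𝕜 := ℂ) c z).congr_fderiv ?_
    ext v
    simp
  | add p q hp hq =>
    simp only [map_add]
    refine (hp.add hq).congr_fderiv ?_
    ext v
    simp [Fin.sum_univ_two]
    ring
  | mul_X p n hp =>
    have h1 : HasFDerivAt (fun z : Fin 2 → ℂ => z n)
        (ContinuousLinearMap.proj (R := ℂ) (φ := fun _ : Fin 2 => ℂ) n) z :=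
      (ContinuousLinearMap.proj (R := ℂ) (φ := fun _ : Fin 2 => ℂ) n).hasFDerivAt
    have h2 := hp.mul h1
    simp only [map_mul, eval_X]
    refine h2.congr_fderiv ?_
    ext v
    fin_cases n <;> simp [Fin.sum_univ_two, pderiv_X, Pi.single_apply] <;> ring

lemma fderiv_eval_single (Q : MvPolynomial (Fin 2) ℂ) (z : Fin 2 → ℂ) (i : Fin 2) :
    fderiv ℂ (fun z => eval z Q) z (Pi.single i 1) = eval z (pderiv i Q) := by
  rw [(hasFDerivAt_eval Q z).fderiv]
  fin_cases i <;> simp [Fin.sum_univ_two]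

lemma analyticAt_eval (Q : MvPolynomial (Fin 2) ℂ) (z : Fin 2 → ℂ) :
    AnalyticAt ℂ (fun z => eval z Q) z := by
  have h := AnalyticOnNhd.eval_mvPolynomial (𝕜 := ℂ) Q
  exact h z (Set.mem_univ z)

lemma eval_dil {a b d : ℕ} {Q : MvPolynomial (Fin 2) ℂ}
    (hQ : ∀ m ∈ Q.support, a * m 0 + b * m 1 = d) (l : ℂ) (z : Fin 2 → ℂ) :
    eval (dil a b l z) Q = l ^ d * eval z Q := by
  rw [eval_eq', eval_eq', Finset.mul_sum]
  refine Finset.sum_congr rfl fun m hm => ?_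
  rw [← hQ m hm]
  simp only [Fin.prod_univ_two, dil, if_true, one_ne_zero, if_false, mul_pow, ← pow_mul, pow_add]
  ring

lemma dil_single (a b : ℕ) (l : ℂ) (i : Fin 2) :
    dil a b l (Pi.single i 1) = l ^ (if i = 0 then a else b) • Pi.single i 1 := by
  funext j
  by_cases h : j = i
  · subst h; simp [dil]
  · simp [dil, h]

lemma eval_pderiv_dil {a b d : ℕ} {Q : MvPolynomial (Fin 2) ℂ}
    (hQ : ∀ m ∈ Q.support, a * m 0 + b * m 1 = d) (l : ℂ) (z : Fin 2 → ℂ) (i : Fin 2) :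
    l ^ (if i = 0 then a else b) * eval (dil a b l z) (pderiv i Q) =
      l ^ d * eval z (pderiv i Q) := by
  have hlin : ∀ (y e : Fin 2 → ℂ), HasDerivAt (fun s : ℂ => eval (y + s • e) Q)
      (fderiv ℂ (fun z => eval z Q) y e) 0 := by
    intro y e
    have h2 : HasDerivAt (fun s : ℂ => y + s • e) e 0 := by
      simpa using ((hasDerivAt_id (0 : ℂ)).smul_const e).const_add y
    have h1 : HasFDerivAt (fun z => eval z Q) (fderiv ℂ (fun z => eval z Q) y)
        (y + (0 : ℂ) • e) := by
      rw [zero_smul, add_zero]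
      exact (analyticAt_eval Q y).differentiableAt.hasFDerivAt
    exact h1.comp_hasDerivAt (0 : ℂ) h2
  have h1 := hlin (dil a b l z) (dil a b l (Pi.single i 1))
  simp only [← dil_add_smul, eval_dil hQ] at h1
  have h2 := (hlin z (Pi.single i 1)).const_mul (l ^ d)
  have h3 := h1.unique h2
  rwa [dil_single, map_smul, fderiv_eval_single, fderiv_eval_single, smul_eq_mul] at h3

lemma dil_eq_zero {a b : ℕ} {l : ℂ} (hl : l ≠ 0) {z : Fin 2 → ℂ} (h : dil a b l z = 0) :
    z = 0 := by
  funext i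
  exact (mul_eq_zero.1 (congrFun h i)).resolve_left (pow_ne_zero _ hl)

/-- For a quasihomogeneous polynomial an isolated critical point at `0` is the only one. -/
lemma crit_eq_zero {a b d : ℕ} (ha : 0 < a) (hb : 0 < b) {Q : MvPolynomial (Fin 2) ℂ}
    (hQ : ∀ m ∈ Q.support, a * m 0 + b * m 1 = d)
    (hiso : ∀ᶠ z in 𝓝 (0 : Fin 2 → ℂ), (∀ i, eval z (pderiv i Q) = 0) → z = 0)
    {z : Fin 2 → ℂ} (hz : ∀ i, eval z (pderiv i Q) = 0) : z = 0 := by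
  have ht : Tendsto (fun l : ℂ => dil a b l z) (𝓝[≠] 0) (𝓝 0) := by
    have hc : Continuous fun l : ℂ => dil a b l z := by unfold dil; fun_prop
    have := hc.tendsto 0
    rw [dil_zero ha hb] at this
    exact this.mono_left nhdsWithin_le_nhds
  obtain ⟨l, hl, hl0⟩ := ((ht.eventually hiso).and eventually_mem_nhdsWithin).exists
  refine dil_eq_zero hl0 (hl fun i => ?_)
  have := eval_pderiv_dil hQ l z i
  rw [hz i, mul_zero] at this
  exact (mul_eq_zero.1 this).resolve_left (pow_ne_zero _ hl0)

/-- The polynomial with conjugate coefficients. -/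
noncomputable def conjPoly (Q : MvPolynomial (Fin 2) ℂ) : MvPolynomial (Fin 2) ℂ :=
  MvPolynomial.map (starRingEnd ℂ) Q

lemma eval_conjPoly (Q : MvPolynomial (Fin 2) ℂ) (w : Fin 2 → ℂ) :
    eval w (conjPoly Q) = star (eval (star w) Q) := by
  have h := eval₂_comp_left (starRingEnd ℂ) (RingHom.id ℂ) (star w) Q
  have hw : (starRingEnd ℂ : ℂ → ℂ) ∘ star w = w := by
    funext i; simp
  rw [hw] at h
  rw [conjPoly, eval_map, ← starRingEnd_apply, eval, coe_eval₂Hom, h]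
  rfl

lemma conjPoly_support (Q : MvPolynomial (Fin 2) ℂ) : (conjPoly Q).support ⊆ Q.support :=
  support_map_subset _ _

lemma conjPoly_crit {Q : MvPolynomial (Fin 2) ℂ}
    (hQ : ∀ z, (∀ i, eval z (pderiv i Q) = 0) → z = 0) {w : Fin 2 → ℂ}
    (hw : ∀ i, eval w (pderiv i (conjPoly Q)) = 0) : w = 0 := by
  have h : star w = 0 := hQ _ fun i => by
    have := hw i
    rw [conjPoly, pderiv_map] at this
    have h2 := eval_conjPoly (pderiv i Q) w
    rw [conjPoly, this] at h2
    exact star_eq_zero.1 h2.symm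
  exact star_eq_zero.1 h

/-- Some weighted-homogeneous curve `w₁ ^ a = v w₀ ^ b` meets `Q = 0` only at the origin. -/
lemma exists_transverse {a b d : ℕ} (ha : 0 < a) (hb : 0 < b) {Q : MvPolynomial (Fin 2) ℂ}
    (hQ : ∀ m ∈ Q.support, a * m 0 + b * m 1 = d)
    (hcrit : ∀ z, (∀ i, eval z (pderiv i Q) = 0) → z = 0) :
    ∃ v : ℂ, ∀ w : Fin 2 → ℂ, eval w Q = 0 → w 1 ^ a = v * w 0 ^ b → w = 0 := by
  have hnorm : ∀ w : Fin 2 → ℂ, w 0 ≠ 0 → ∃ (l u : ℂ), l ≠ 0 ∧ w = dil a b l ![1, u] := by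
    intro w hw
    obtain ⟨l, hl⟩ := IsAlgClosed.exists_pow_nat_eq (w 0) ha
    have hl0 : l ≠ 0 := by
      rintro rfl
      rw [zero_pow ha.ne'] at hl
      exact hw hl.symm
    refine ⟨l, w 1 / l ^ b, hl0, ?_⟩
    funext i
    fin_cases i
    · simp [dil, hl]
    · simp [dil, mul_div_cancel₀ _ (pow_ne_zero b hl0)]
  set p : Polynomial ℂ := aeval ![1, Polynomial.X] Q with hp
  have hpe : ∀ u, p.eval u = eval ![1, u] Q := by
    intro u
    have h := eval₂_comp_left (Polynomial.evalRingHom u) (algebraMap ℂ (Polynomial ℂ))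
      ![1, Polynomial.X] Q
    rw [hp, aeval_def, ← Polynomial.coe_evalRingHom, h, eval, coe_eval₂Hom]
    congr 1
    · ext; simp
    · funext i
      fin_cases i <;> simp
  have hp0 : p ≠ 0 := by
    intro h0
    have hz : ∀ w : Fin 2 → ℂ, w 0 ≠ 0 → eval w Q = 0 := by
      intro w hw
      obtain ⟨l, u, -, rfl⟩ := hnorm w hw
      rw [eval_dil hQ, ← hpe, h0]
      simp
    have hloc : (fun w => eval w Q) =ᶠ[𝓝 (![1, 0] : Fin 2 → ℂ)] fun _ => 0 := by
      have : ∀ᶠ w : Fin 2 → ℂ in 𝓝 ![1, 0], w 0 ≠ 0 :=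
        (continuous_apply 0).continuousAt.eventually_ne (by simp)
      filter_upwards [this] with w hw using hz w hw
    have h1 : (![1, 0] : Fin 2 → ℂ) = 0 := hcrit _ fun i => by
      rw [← fderiv_eval_single, hloc.fderiv_eq]
      simp
    simpa using congrFun h1 0
  obtain ⟨v, hv⟩ := (p.roots.toFinset.image fun u => u ^ a).exists_notMem
  refine ⟨v, fun w hw hwv => ?_⟩
  by_cases hw0 : w 0 = 0
  · rw [hw0, zero_pow hb.ne', mul_zero] at hwv
    funext i
    fin_cases i
    · exact hw0
    · exact eq_zero_of_pow_eq_zero hwv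
  · exfalso
    obtain ⟨l, u, hl, rfl⟩ := hnorm w hw0
    rw [eval_dil hQ] at hw
    have hu := (mul_eq_zero.1 hw).resolve_left (pow_ne_zero _ hl)
    refine hv (Finset.mem_image.2 ⟨u, ?_, ?_⟩)
    · rw [Multiset.mem_toFinset, Polynomial.mem_roots hp0, Polynomial.IsRoot, hpe, hu]
    · simp only [dil, one_ne_zero, if_false, if_true, Matrix.cons_val_one, Matrix.cons_val_zero,
        mul_pow, mul_one, ← pow_mul] at hwv
      rw [mul_comm b a, mul_comm v] at hwv
      exact mul_left_cancel₀ (pow_ne_zero _ hl) hwv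

end Polynomial

/-! ### Isolated solutions of systems with given leading part -/

section Leading

lemma dil₂_inl (a b : ℕ) (l : ℂ) (i : Fin 2) :
    dil₂ a b l ((Pi.single i 1, 0) : (Fin 2 → ℂ) × (Fin 2 → ℂ)) =
      l ^ (if i = 0 then a else b) • (Pi.single i 1, 0) := by
  have hd0 : dil a b l 0 = 0 := by funext i; simp [dil]
  rw [dil₂, dil_single, hd0, Prod.smul_mk, smul_zero]

lemma dil₂_inr (a b : ℕ) (l : ℂ) (i : Fin 2) :
    dil₂ a b l ((0, Pi.single i 1) : (Fin 2 → ℂ) × (Fin 2 → ℂ)) =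
      l ^ (if i = 0 then a else b) • (0, Pi.single i 1) := by
  have hd0 : dil a b l 0 = 0 := by funext i; simp [dil]
  rw [dil₂, dil_single, hd0, Prod.smul_mk, smul_zero]

variable {a b d : ℕ} {FC P : (Fin 2 → ℂ) × (Fin 2 → ℂ) → ℂ}

lemma fderiv_weighted_hom (hP : ∀ q, AnalyticAt ℂ P q)
    (hhom : ∀ l q, P (dil₂ a b l q) = l ^ d * P q) (l : ℂ) (q e : (Fin 2 → ℂ) × (Fin 2 → ℂ)) :
    fderiv ℂ P (dil₂ a b l q) (dil₂ a b l e) = l ^ d * fderiv ℂ P q e := by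
  have h1 := hasDerivAt_dil₂_line (a := a) (b := b) (l := l) (q := q) (e := e) (s := 0)
    (hP _).differentiableAt
  have h2 := (hasDerivAt_dil₂_line (a := a) (b := b) (l := 1) (q := q) (e := e) (s := 0)
    (hP _).differentiableAt).const_mul (l ^ d)
  have hone : ∀ x, dil₂ a b 1 x = x := fun x => by simp [dil₂, dil_one]
  simp only [hhom, hone, zero_smul, add_zero] at h1 h2
  exact h1.unique h2

/-- The weighted leading part of `∂FC/∂e` is `∂P/∂e`, for a weighted eigendirection `e`. -/
lemma leading_deriv (hP : ∀ q, AnalyticAt ℂ P q) (hhom : ∀ l q, P (dil₂ a b l q) = l ^ d * P q)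
    (hbd : ∃ C l₀ : ℝ, 0 < l₀ ∧ ∀ l : ℝ, 0 < l → l ≤ l₀ → ∀ q, ‖q‖ ≤ 2 →
      AnalyticAt ℂ (FC - P) (dil₂ a b l q) ∧ ‖(FC - P) (dil₂ a b l q)‖ ≤ C * l ^ (d + 1))
    {e : (Fin 2 → ℂ) × (Fin 2 → ℂ)} {m : ℕ} (he : ∀ l, dil₂ a b l e = l ^ m • e) (hen : ‖e‖ ≤ 1) :
    ∃ (m D : ℕ) (C l₀ : ℝ), 0 < l₀ ∧ ∀ l : ℝ, 0 < l → l ≤ l₀ → ∀ q, ‖q‖ ≤ 1 →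
      ‖(l : ℂ) ^ m * fderiv ℂ FC (dil₂ a b l q) e - (l : ℂ) ^ D * fderiv ℂ P q e‖ ≤
        C * l ^ (D + 1) := by
  obtain ⟨C, l₀, hl₀, h⟩ := hbd
  refine ⟨m, d, C, l₀, hl₀, fun l hl hll q hq => ?_⟩
  have hbd := h l hl hll
  have h1 := weighted_deriv_bound hbd hq hen
  have hsplit : fderiv ℂ FC (dil₂ a b l q) =
      fderiv ℂ (FC - P) (dil₂ a b l q) + fderiv ℂ P (dil₂ a b l q) := by
    have h2 := ((hbd q (by linarith)).1.differentiableAt.hasFDerivAt).add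
      (hP (dil₂ a b l q)).differentiableAt.hasFDerivAt
    rw [sub_add_cancel] at h2
    exact h2.fderiv
  rw [← fderiv_weighted_hom hP hhom, ← smul_eq_mul, ← map_smul, ← he, hsplit]
  simpa using h1

lemma leading_value (hhom : ∀ l q, P (dil₂ a b l q) = l ^ d * P q)
    (hbd : ∃ C l₀ : ℝ, 0 < l₀ ∧ ∀ l : ℝ, 0 < l → l ≤ l₀ → ∀ q, ‖q‖ ≤ 2 →
      AnalyticAt ℂ (FC - P) (dil₂ a b l q) ∧ ‖(FC - P) (dil₂ a b l q)‖ ≤ C * l ^ (d + 1)) :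
    ∃ (m D : ℕ) (C l₀ : ℝ), 0 < l₀ ∧ ∀ l : ℝ, 0 < l → l ≤ l₀ → ∀ q, ‖q‖ ≤ 1 →
      ‖(l : ℂ) ^ m * FC (dil₂ a b l q) - (l : ℂ) ^ D * P q‖ ≤ C * l ^ (D + 1) := by
  obtain ⟨C, l₀, hl₀, h⟩ := hbd
  refine ⟨0, d, C, l₀, hl₀, fun l hl hll q hq => ?_⟩
  rw [← hhom, pow_zero, one_mul]
  exact (h l hl hll q (by linarith)).2

lemma continuous_fderiv_apply (hP : ∀ q, AnalyticAt ℂ P q) (e : (Fin 2 → ℂ) × (Fin 2 → ℂ)) :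
    Continuous fun q => fderiv ℂ P q e :=
  continuous_iff_continuousAt.2 fun q => ((hP q).fderiv.continuousAt).clm_apply continuousAt_const

/-- The set `FC = 0`, `∂FC/∂e₀ = ∂FC/∂e₁ = 0` has dimension one as soon as the weighted leading
parts, together with one more weighted homogeneous function `t`, have no common zero but `0`. -/
lemma dimH_side (ha : 0 < a) (hb : 0 < b) (hFC : AnalyticAt ℂ FC 0) (hFC0 : FC 0 = 0)
    (hdFC0 : fderiv ℂ FC 0 = 0) (hP : ∀ q, AnalyticAt ℂ P q)
    (hhom : ∀ l q, P (dil₂ a b l q) = l ^ d * P q)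
    (hbd : ∃ C l₀ : ℝ, 0 < l₀ ∧ ∀ l : ℝ, 0 < l → l ≤ l₀ → ∀ q, ‖q‖ ≤ 2 →
      AnalyticAt ℂ (FC - P) (dil₂ a b l q) ∧ ‖(FC - P) (dil₂ a b l q)‖ ≤ C * l ^ (d + 1))
    {e : Fin 2 → (Fin 2 → ℂ) × (Fin 2 → ℂ)} {m : Fin 2 → ℕ}
    (he : ∀ i l, dil₂ a b l (e i) = l ^ m i • e i) (hen : ∀ i, ‖e i‖ ≤ 1)
    {t : (Fin 2 → ℂ) × (Fin 2 → ℂ) → ℂ} {D : ℕ} (ht : ∀ q, AnalyticAt ℂ t q) (ht0 : t 0 = 0)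
    (hthom : ∀ l q, t (dil₂ a b l q) = l ^ D * t q)
    (hzero : ∀ q, (∀ i, fderiv ℂ P q (e i) = 0) → P q = 0 → t q = 0 → q = 0) :
    (∃ U ∈ 𝓝 (0 : (Fin 2 → ℂ) × (Fin 2 → ℂ)),
      dimH ({p | FC p = 0 ∧ ∀ i, fderiv ℂ FC p (e i) = 0} ∩ U) ≤ 2) ∧
    ∀ U ∈ 𝓝 (0 : (Fin 2 → ℂ) × (Fin 2 → ℂ)),
      2 ≤ dimH ({p | FC p = 0 ∧ ∀ i, fderiv ℂ FC p (e i) = 0} ∩ U) := by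
  have hiso := isolated_of_leading ha hb (ι := Fin 4)
    (f := ![fun p => fderiv ℂ FC p (e 0), fun p => fderiv ℂ FC p (e 1), FC, t])
    (P := ![fun p => fderiv ℂ P p (e 0), fun p => fderiv ℂ P p (e 1), P, t])
    (by
      intro j
      fin_cases j
      · exact continuous_fderiv_apply hP _
      · exact continuous_fderiv_apply hP _
      · exact continuous_iff_continuousAt.2 fun q => (hP q).continuousAt
      · exact continuous_iff_continuousAt.2 fun q => (ht q).continuousAt)
    (by
      intro j
      fin_cases j
      · exact leading_deriv hP hhom hbd (he 0) (hen 0)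
      · exact leading_deriv hP hhom hbd (he 1) (hen 1)
      · exact leading_value hhom hbd
      · refine ⟨0, D, 0, 1, one_pos, fun l _ _ q _ => ?_⟩
        show ‖(l : ℂ) ^ 0 * t (dil₂ a b l q) - (l : ℂ) ^ D * t q‖ ≤ 0 * l ^ (D + 1)
        rw [hthom]
        simp)
    (by
      intro q hq
      exact hzero q (Fin.forall_fin_two.2 ⟨hq 0, hq 1⟩) (hq 2) (hq 3))
  have hfr : Module.finrank ℂ (Fin 4 → ℂ) = Module.finrank ℂ ((Fin 2 → ℂ) × (Fin 2 → ℂ)) := by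
    simp
  have key := dimH_curve (n := 3) (ContinuousLinearEquiv.ofFinrankEq hfr)
    (g := ![fun p => fderiv ℂ FC p (e 0), fun p => fderiv ℂ FC p (e 1), FC]) (t := t)
    (by
      intro i
      have hd : ∀ v, AnalyticAt ℂ (fun p => fderiv ℂ FC p v) 0 := fun v =>
        ((ContinuousLinearMap.apply ℂ ℂ v).analyticAt _).comp hFC.fderiv
      fin_cases i
      · exact hd _
      · exact hd _
      · exact hFC)
    (ht 0)
    (by
      intro i
      fin_cases i
      · simp [hdFC0]
      · simp [hdFC0]
      · exact hFC0)
    ht0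
    (by
      filter_upwards [hiso] with p hp hg htp
      refine hp fun j => ?_
      fin_cases j
      · exact hg 0
      · exact hg 1
      · exact hg 2
      · exact htp)
  have hset : {p : (Fin 2 → ℂ) × (Fin 2 → ℂ) | ∀ i,
      (![fun p => fderiv ℂ FC p (e 0), fun p => fderiv ℂ FC p (e 1), FC] : Fin 3 → _ → ℂ) i p = 0} =
      {p | FC p = 0 ∧ ∀ i, fderiv ℂ FC p (e i) = 0} := by
    ext p
    simp only [Fin.forall_fin_succ, Set.mem_ofPred_eq]
    simp
    tauto
  rw [hset] at key
  exact key

/-- If the leading part `P` has no critical point but `0`, then `FC` has an isolated critical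
point. -/
lemma isolated_crit (ha : 0 < a) (hb : 0 < b) (hP : ∀ q, AnalyticAt ℂ P q)
    (hhom : ∀ l q, P (dil₂ a b l q) = l ^ d * P q)
    (hbd : ∃ C l₀ : ℝ, 0 < l₀ ∧ ∀ l : ℝ, 0 < l → l ≤ l₀ → ∀ q, ‖q‖ ≤ 2 →
      AnalyticAt ℂ (FC - P) (dil₂ a b l q) ∧ ‖(FC - P) (dil₂ a b l q)‖ ≤ C * l ^ (d + 1))
    (hzero : ∀ q, fderiv ℂ P q = 0 → q = 0) :
    ∀ᶠ p in 𝓝 (0 : (Fin 2 → ℂ) × (Fin 2 → ℂ)), fderiv ℂ FC p = 0 → p = 0 := by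
  have hen : ∀ i : Fin 2, ‖(Pi.single i 1 : Fin 2 → ℂ)‖ ≤ 1 := fun i => by
    rw [Pi.norm_single]; simp
  have hiso := isolated_of_leading ha hb (ι := Fin 2 × Bool)
    (f := fun j p => fderiv ℂ FC p (if j.2 then (Pi.single j.1 1, 0) else (0, Pi.single j.1 1)))
    (P := fun j p => fderiv ℂ P p (if j.2 then (Pi.single j.1 1, 0) else (0, Pi.single j.1 1)))
    (fun j => continuous_fderiv_apply hP _)
    (by
      rintro ⟨i, s⟩
      refine leading_deriv hP hhom hbd (m := if i = 0 then a else b) (fun l => ?_) ?_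
      · cases s
        · exact dil₂_inr a b l i
        · exact dil₂_inl a b l i
      · cases s <;> simpa [Prod.norm_def] using hen i)
    (by
      intro q hq
      refine hzero q (ContinuousLinearMap.coe_injective ?_)
      ext i
      · simpa using hq (i, true)
      · simpa using hq (i, false))
  filter_upwards [hiso] with p hp hd
  exact hp fun j => by rw [hd]; rfl

end Leading

/-! ### The complexification and its differential -/

section Complexification

open MvPolynomial

/-- The complexification `(Q(z) + Q̄(w)) / 2` of `Re Q`. -/
noncomputable def leadP (Q : MvPolynomial (Fin 2) ℂ) (p : (Fin 2 → ℂ) × (Fin 2 → ℂ)) : ℂ :=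
  (eval p.1 Q + eval p.2 (conjPoly Q)) / 2

lemma hasFDerivAt_leadP (Q : MvPolynomial (Fin 2) ℂ) (p : (Fin 2 → ℂ) × (Fin 2 → ℂ)) :
    HasFDerivAt (leadP Q) ((2 : ℂ)⁻¹ •
      ((fderiv ℂ (fun z => eval z Q) p.1).comp (ContinuousLinearMap.fst ℂ _ _) +
        (fderiv ℂ (fun z => eval z (conjPoly Q)) p.2).comp (ContinuousLinearMap.snd ℂ _ _))) p := by
  have h1 : HasFDerivAt (fun p : (Fin 2 → ℂ) × (Fin 2 → ℂ) => eval p.1 Q) _ p :=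
    HasFDerivAt.comp (g := fun z => eval z Q) (f := Prod.fst) p
      (analyticAt_eval Q p.1).differentiableAt.hasFDerivAt hasFDerivAt_fst
  have h2 : HasFDerivAt (fun p : (Fin 2 → ℂ) × (Fin 2 → ℂ) => eval p.2 (conjPoly Q)) _ p :=
    HasFDerivAt.comp (g := fun z => eval z (conjPoly Q)) (f := Prod.snd) p
      (analyticAt_eval (conjPoly Q) p.2).differentiableAt.hasFDerivAt hasFDerivAt_snd
  have h3 := (h1.add h2).const_smul ((2 : ℂ)⁻¹)
  refine h3.congr_of_eventuallyEq (Eventually.of_forall fun p => ?_)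
  simp [leadP, div_eq_inv_mul]

lemma analyticAt_leadP (Q : MvPolynomial (Fin 2) ℂ) (p : (Fin 2 → ℂ) × (Fin 2 → ℂ)) :
    AnalyticAt ℂ (leadP Q) p := by
  have h1 : AnalyticAt ℂ (fun p : (Fin 2 → ℂ) × (Fin 2 → ℂ) => eval p.1 Q) p :=
    AnalyticAt.fun_comp (g := fun z => eval z Q) (analyticAt_eval Q p.1) analyticAt_fst
  have h2 : AnalyticAt ℂ (fun p : (Fin 2 → ℂ) × (Fin 2 → ℂ) => eval p.2 (conjPoly Q)) p :=
    AnalyticAt.fun_comp (g := fun z => eval z (conjPoly Q)) (analyticAt_eval _ p.2) analyticAt_snd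
  exact (h1.fun_add h2).fun_div analyticAt_const two_ne_zero

lemma fderiv_leadP_inl (Q : MvPolynomial (Fin 2) ℂ) (p : (Fin 2 → ℂ) × (Fin 2 → ℂ)) (i : Fin 2) :
    fderiv ℂ (leadP Q) p (Pi.single i 1, 0) = 2⁻¹ * eval p.1 (pderiv i Q) := by
  rw [(hasFDerivAt_leadP Q p).fderiv]
  simp [fderiv_eval_single]

lemma fderiv_leadP_inr (Q : MvPolynomial (Fin 2) ℂ) (p : (Fin 2 → ℂ) × (Fin 2 → ℂ)) (i : Fin 2) :
    fderiv ℂ (leadP Q) p (0, Pi.single i 1) = 2⁻¹ * eval p.2 (pderiv i (conjPoly Q)) := by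
  rw [(hasFDerivAt_leadP Q p).fderiv]
  simp [fderiv_eval_single]

lemma leadP_star (Q : MvPolynomial (Fin 2) ℂ) (z : Fin 2 → ℂ) :
    leadP Q (z, star z) = ((eval z Q).re : ℂ) := by
  rw [leadP, eval_conjPoly, star_star, Complex.re_eq_add_conj]
  rfl

/-- The complexification of a function with vanishing differential at `0` has vanishing
differential at `0`. -/
lemma fderiv_complexification_zero {F : (Fin 2 → ℂ) → ℝ} (hF : AnalyticAt ℝ F 0)
    (hsing : fderiv ℝ F 0 = 0) {FC : (Fin 2 → ℂ) × (Fin 2 → ℂ) → ℂ} (hFC : IsComplexification F FC) :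
    fderiv ℂ FC 0 = 0 := by
  obtain ⟨hFCa, hFCeq⟩ := hFC
  have hdiag : ∀ v : Fin 2 → ℂ, fderiv ℂ FC 0 (v, star v) = 0 := by
    intro v
    have hγ : HasDerivAt (fun s : ℝ => s • ((v, star v) : (Fin 2 → ℂ) × (Fin 2 → ℂ)))
        (v, star v) 0 := by
      simpa using (hasDerivAt_id (0 : ℝ)).smul_const ((v, star v) : (Fin 2 → ℂ) × (Fin 2 → ℂ))
    have hδ : HasDerivAt (fun s : ℝ => s • v) v 0 := by
      simpa using (hasDerivAt_id (0 : ℝ)).smul_const v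
    have h1 : HasDerivAt (fun s : ℝ => FC (s • (v, star v))) (fderiv ℂ FC 0 (v, star v)) 0 := by
      have h := hFCa.differentiableAt.hasFDerivAt.restrictScalars ℝ
      rw [← zero_smul ℝ ((v, star v) : (Fin 2 → ℂ) × (Fin 2 → ℂ))] at h
      refine (h.comp_hasDerivAt (0 : ℝ) hγ).congr_deriv ?_
      simp
    have h2 : HasDerivAt (fun s : ℝ => F (s • v)) 0 0 := by
      have h := hF.differentiableAt.hasFDerivAt
      rw [hsing, ← zero_smul ℝ v] at h
      refine (h.comp_hasDerivAt (0 : ℝ) hδ).congr_deriv ?_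
      simp
    have h3 := h2.ofReal_comp
    have hev : (fun s : ℝ => FC (s • (v, star v))) =ᶠ[𝓝 0] fun s : ℝ => ((F (s • v) : ℝ) : ℂ) := by
      have hc : Tendsto (fun s : ℝ => s • v) (𝓝 0) (𝓝 0) := by
        simpa using hδ.continuousAt.tendsto
      filter_upwards [hc.eventually hFCeq] with s hs
      rw [← hs, star_smul, star_trivial s, Prod.smul_mk]
    simpa using (h3.congr_of_eventuallyEq hev).unique h1 |>.symm
  refine ContinuousLinearMap.ext fun p => ?_
  -- `dFC(v, v̄) = 0` for `v` and `i v` separates the two factors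
  have hsep : ∀ v : Fin 2 → ℂ, fderiv ℂ FC 0 (v, 0) = 0 ∧ fderiv ℂ FC 0 (0, star v) = 0 := by
    intro v
    have h1 := hdiag v
    have h2 := hdiag (Complex.I • v)
    have e1 : ((v, star v) : (Fin 2 → ℂ) × (Fin 2 → ℂ)) = (v, 0) + (0, star v) := by simp
    have e2 : ((Complex.I • v, star (Complex.I • v)) : (Fin 2 → ℂ) × (Fin 2 → ℂ)) =
        Complex.I • (v, 0) - Complex.I • (0, star v) := by
      ext i <;> simp
    rw [e1, map_add] at h1
    rw [e2, map_sub, map_smul, map_smul, ← smul_sub, smul_eq_zero] at h2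
    have h3 := h2.resolve_left Complex.I_ne_zero
    constructor
    · linear_combination (h1 + h3) / 2
    · linear_combination (h1 - h3) / 2
  have e : p = (p.1, 0) + (0, star (star p.2)) := by simp
  rw [e, map_add, (hsep p.1).1, (hsep (star p.2)).2]
  simp

/-- A linear form with `A(v) = 0 → A(v₁, 0) = 0` for all `v` vanishes on one of the factors. -/
lemma linear_form_split {V : Type*} [AddCommGroup V] [Module ℂ V] (A : V × V →ₗ[ℂ] ℂ) :
    (∀ v, A v = 0 → A (v.1, 0) = 0) ↔ (∀ u, A (u, 0) = 0) ∨ ∀ u, A (0, u) = 0 := by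
  have hadd : ∀ v : V × V, A v = A (v.1, 0) + A (0, v.2) := fun v => by
    rw [← map_add]; simp
  constructor
  · intro h
    by_contra! hne
    obtain ⟨⟨u, hu⟩, u', hu'⟩ := hne
    refine hu (h (u, -(A (u, 0) / A (0, u')) • u') ?_)
    have : ((0 : V), -(A (u, 0) / A (0, u')) • u') = -(A (u, 0) / A (0, u')) • ((0 : V), u') := by
      simp
    rw [hadd, this, map_smul, smul_eq_mul]
    field_simp
    ring
  · rintro (h | h) v hv
    · exact h _
    · rw [hadd, h, add_zero] at hv
      exact hv

lemma linear_form_inl_eq_zero (A : (Fin 2 → ℂ) × (Fin 2 → ℂ) →L[ℂ] ℂ) :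
    (∀ u, A (u, 0) = 0) ↔ ∀ i, A (Pi.single i 1, 0) = 0 := by
  refine ⟨fun h i => h _, fun h u => ?_⟩
  have : A.toLinearMap ∘ₗ LinearMap.inl ℂ _ _ = 0 := by
    ext i
    simpa using h i
  exact LinearMap.congr_fun this u

lemma linear_form_inr_eq_zero (A : (Fin 2 → ℂ) × (Fin 2 → ℂ) →L[ℂ] ℂ) :
    (∀ u, A (0, u) = 0) ↔ ∀ i, A (0, Pi.single i 1) = 0 := by
  refine ⟨fun h i => h _, fun h u => ?_⟩
  have : A.toLinearMap ∘ₗ LinearMap.inr ℂ _ _ = 0 := by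
    ext i
    simpa using h i
  exact LinearMap.congr_fun this u

end Complexification

/-- **Proposition (b).** `Sing(L_ℂ)` has codimension two in the three-dimensional complex
manifold `M*_ℂ`: near `0` it is a complex-analytic set of complex dimension one, i.e. of
Hausdorff dimension two. -/
theorem stmt_5
 (a b d : ℕ) (ha : 0 < a) (hb : 0 < b) (hd : 0 < d) (hab : Nat.gcd a b = 1)
    (Q : MvPolynomial (Fin 2) ℂ)
    -- `Q` is quasihomogeneous of type `(a,b)` and quasihomogeneous degree `d`
    (hQqh : ∀ m ∈ Q.support, a * m 0 + b * m 1 = d)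
    -- `Q` has an isolated singularity at `0 ∈ ℂ²`
    (hQcrit : ∀ i, MvPolynomial.eval (0 : Fin 2 → ℂ) (MvPolynomial.pderiv i Q) = 0)
    (hQsing : ∀ᶠ z in 𝓝 (0 : Fin 2 → ℂ),
      (∀ i, MvPolynomial.eval z (MvPolynomial.pderiv i Q) = 0) → z = 0)
    (F H : (Fin 2 → ℂ) → ℝ)
    (hF : AnalyticAt ℝ F 0) (hH : AnalyticAt ℝ H 0)
    -- `F(z) = Re(Q(z)) + H(z, z̄)`
    (hFeq : ∀ᶠ z in 𝓝 (0 : Fin 2 → ℂ), F z = (MvPolynomial.eval z Q).re + H z)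
    -- every monomial `z^μ z̄^ν` of the Taylor series of `H` has weighted degree
    -- `a(μ₁+ν₁) + b(μ₂+ν₂) > d`
    (hHord : ∃ r > (0:ℝ), ∀ z : Fin 2 → ℂ, ‖z‖ < r →
      Tendsto (fun lam : ℝ => H (fun i => (lam : ℂ) ^ (if i = 0 then a else b) * z i) / lam ^ d)
        (𝓝[>] 0) (𝓝 0))
    -- `M = {F = 0}` is a singular hypersurface at `0`
    (hF0 : F 0 = 0) (hsing : fderiv ℝ F 0 = 0)
    (hirr : IrreducibleRGerm F)
    (hLF : LeviFlatGerm F)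
    (FC : ((Fin 2 → ℂ) × (Fin 2 → ℂ)) → ℂ) (hFC : IsComplexification F FC)
    :
    ∃ U ∈ 𝓝 (0 : (Fin 2 → ℂ) × (Fin 2 → ℂ)), dimH (singLC FC ∩ U) = 2 := by
  obtain ⟨hFCa, hFCeq⟩ := id hFC
  have hFC0 : FC 0 = 0 := by
    have h := hFCeq.self_of_nhds
    rw [star_zero, hF0, Complex.ofReal_zero] at h
    exact h
  have hdFC0 := fderiv_complexification_zero hF hsing hFC
  have hcrit := fun z => crit_eq_zero (z := z) ha hb hQqh hQsing
  have hcrit' := fun w => conjPoly_crit (w := w) hcrit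
  have hQqh' : ∀ m ∈ (conjPoly Q).support, a * m 0 + b * m 1 = d := fun m hm =>
    hQqh m (conjPoly_support Q hm)
  have hev0 : ∀ R : MvPolynomial (Fin 2) ℂ, (∀ m ∈ R.support, a * m 0 + b * m 1 = d) →
      MvPolynomial.eval 0 R = 0 := by
    intro R hR
    have h := eval_dil hR 0 0
    rwa [dil_zero ha hb, zero_pow hd.ne', zero_mul] at h
  have hP := analyticAt_leadP Q
  have hhom : ∀ l q, leadP Q (dil₂ a b l q) = l ^ d * leadP Q q := by
    intro l q
    simp only [leadP, dil₂, eval_dil hQqh, eval_dil hQqh']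
    ring
  have hbd : ∃ C l₀ : ℝ, 0 < l₀ ∧ ∀ l : ℝ, 0 < l → l ≤ l₀ → ∀ q, ‖q‖ ≤ 2 →
      AnalyticAt ℂ (FC - leadP Q) (dil₂ a b l q) ∧
        ‖(FC - leadP Q) (dil₂ a b l q)‖ ≤ C * l ^ (d + 1) := by
    obtain ⟨r, hr, hord⟩ := hHord
    refine weighted_bound ha hb (hFCa.sub (hP 0)) hr fun z hz => ?_
    have hlim : Tendsto (fun l : ℝ => ((H (dil a b l z) / l ^ d : ℝ) : ℂ)) (𝓝[>] 0) (𝓝 0) := by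
      have h := (Complex.continuous_ofReal.tendsto 0).comp (hord z hz)
      rw [Complex.ofReal_zero] at h
      exact h
    refine hlim.congr' ?_
    have hc : Tendsto (fun l : ℝ => dil a b (l : ℂ) z) (𝓝[>] 0) (𝓝 0) := by
      have hcont : Continuous fun l : ℝ => dil a b (l : ℂ) z := by unfold dil; fun_prop
      have h := hcont.tendsto 0
      rw [Complex.ofReal_zero, dil_zero ha hb] at h
      exact h.mono_left nhdsWithin_le_nhds
    filter_upwards [hc.eventually hFCeq, hc.eventually hFeq] with l h1 h2
    rw [Pi.sub_apply, h1, h2, leadP_star]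
    push_cast
    ring
  have hen : ∀ i : Fin 2, ‖(Pi.single i 1 : Fin 2 → ℂ)‖ ≤ 1 := fun i => by
    rw [Pi.norm_single]; simp
  have two_inv : (2 : ℂ)⁻¹ ≠ 0 := inv_ne_zero two_ne_zero
  have hz1 : ∀ q, (∀ i, fderiv ℂ (leadP Q) q (Pi.single i 1, 0) = 0) → q.1 = 0 := fun q h =>
    hcrit _ fun i => (mul_eq_zero.1 ((fderiv_leadP_inl Q q i).symm.trans (h i))).resolve_left two_inv
  have hz2 : ∀ q, (∀ i, fderiv ℂ (leadP Q) q (0, Pi.single i 1) = 0) → q.2 = 0 := fun q h =>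
    hcrit' _ fun i =>
      (mul_eq_zero.1 ((fderiv_leadP_inr Q q i).symm.trans (h i))).resolve_left two_inv
  -- the two branches `∂FC/∂z = 0` and `∂FC/∂w = 0`
  obtain ⟨v₁, hv₁⟩ := exists_transverse ha hb hQqh' hcrit'
  obtain ⟨v₂, hv₂⟩ := exists_transverse ha hb hQqh hcrit
  have hthom : ∀ (v l : ℂ) (w : Fin 2 → ℂ), dil a b l w 1 ^ a - v * dil a b l w 0 ^ b =
      l ^ (a * b) * (w 1 ^ a - v * w 0 ^ b) := by
    intro v l w
    simp only [dil, one_ne_zero, if_true, if_false, mul_pow, ← pow_mul, mul_comm b a]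
    ring
  obtain ⟨⟨U₁, hU₁, hle₁⟩, hge₁⟩ := dimH_side ha hb hFCa hFC0 hdFC0 hP hhom hbd
    (e := fun i => (Pi.single i 1, 0)) (m := fun i => if i = 0 then a else b)
    (fun i l => dil₂_inl a b l i) (fun i => by simpa [Prod.norm_def] using hen i)
    (t := fun q => q.2 1 ^ a - v₁ * q.2 0 ^ b) (D := a * b)
    (fun q => ContDiffAt.analyticAt (by fun_prop)) (by simp [ha.ne', hb.ne'])
    (fun l q => hthom v₁ l q.2)
    (by
      intro q h1 h2 h3
      have hq1 := hz1 q h1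
      rw [leadP, hq1, hev0 Q hQqh, zero_add, div_eq_zero_iff] at h2
      exact Prod.ext hq1 (hv₁ _ (h2.resolve_right two_ne_zero) (sub_eq_zero.1 h3)))
  obtain ⟨⟨U₂, hU₂, hle₂⟩, -⟩ := dimH_side ha hb hFCa hFC0 hdFC0 hP hhom hbd
    (e := fun i => (0, Pi.single i 1)) (m := fun i => if i = 0 then a else b)
    (fun i l => dil₂_inr a b l i) (fun i => by simpa [Prod.norm_def] using hen i)
    (t := fun q => q.1 1 ^ a - v₂ * q.1 0 ^ b) (D := a * b)
    (fun q => ContDiffAt.analyticAt (by fun_prop)) (by simp [ha.ne', hb.ne'])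
    (fun l q => hthom v₂ l q.1)
    (by
      intro q h1 h2 h3
      have hq2 := hz2 q h1
      rw [leadP, hq2, hev0 _ hQqh', add_zero, div_eq_zero_iff] at h2
      exact Prod.ext (hv₂ _ (h2.resolve_right two_ne_zero) (sub_eq_zero.1 h3)) hq2)
  have hisoc := isolated_crit ha hb hP hhom hbd fun q hq =>
    Prod.ext (hz1 q fun i => by rw [hq]; rfl) (hz2 q fun i => by rw [hq]; rfl)
  refine ⟨U₁ ∩ U₂ ∩ {p | fderiv ℂ FC p = 0 → p = 0}, inter_mem (inter_mem hU₁ hU₂) hisoc, ?_⟩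
  have hsplit : ∀ p, (∀ v, fderiv ℂ FC p v = 0 → fderiv ℂ FC p (v.1, 0) = 0) ↔
      (∀ i, fderiv ℂ FC p (Pi.single i 1, 0) = 0) ∨ ∀ i, fderiv ℂ FC p (0, Pi.single i 1) = 0 := by
    intro p
    rw [← linear_form_inl_eq_zero, ← linear_form_inr_eq_zero]
    exact linear_form_split (fderiv ℂ FC p).toLinearMap
  refine le_antisymm ?_ ?_
  · refine (dimH_mono (t := ({p | FC p = 0 ∧ ∀ i, fderiv ℂ FC p (Pi.single i 1, 0) = 0} ∩ U₁) ∪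
      ({p | FC p = 0 ∧ ∀ i, fderiv ℂ FC p (0, Pi.single i 1) = 0} ∩ U₂)) ?_).trans ?_
    · rintro p ⟨⟨h0, -, h⟩, ⟨h1, h2⟩, -⟩
      rcases (hsplit p).1 h with h | h
      · exact Or.inl ⟨⟨h0, h⟩, h1⟩
      · exact Or.inr ⟨⟨h0, h⟩, h2⟩
    · rw [dimH_union]
      exact max_le hle₁ hle₂
  · -- the branch `∂FC/∂z = 0` minus the origin consists of singular points of the foliation
    have h2 := (hge₁ _ (inter_mem (inter_mem hU₁ hU₂) hisoc)).trans (dimH_mono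
      (t := (singLC FC ∩ (U₁ ∩ U₂ ∩ {p | fderiv ℂ FC p = 0 → p = 0})) ∪ {0}) (by
        rintro p ⟨⟨h0, h⟩, hU⟩
        by_cases hp : p = 0
        · exact Or.inr hp
        · exact Or.inl ⟨⟨h0, fun hd => hp (hU.2 hd), (hsplit p).2 (Or.inl h)⟩, hU⟩))
    rwa [dimH_union, dimH_singleton, max_eq_left zero_le] at h2
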